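/- arXiv:0709.2334 — 2 statements merged into one kernel-verified Lean document; each statement's English description precedes it below -/
import Mathlib

section
/- Let k be a field and let H be a commutative noetherian Hopf algebra over k. Then H is Gorenstein; that is, H has finite injective dimension as a module over itself. -/
open CategoryTheory

universe w v u u' u2

/-!
STATEMENT 8:
A commutative noetherian Hopf algebra over a field is Gorenstein: it has finite
injective dimension as a module over itself.  The injective dimension (an element
of `ℕ∞`) is expressed through the vanishing of the Ext-groups `Ext^i (-, H)`.
-/

/-! ### Ext groups over an arbitrary ring -/

instance hasExtModuleCat (R : Type u) [Ring R] :
    HasExt.{max u (v + 1)} (ModuleCat.{v} R) :=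
  letI := HasDerivedCategory.standard (ModuleCat.{v} R)
  hasExt_of_hasDerivedCategory _

/-- The canonical map `(X ⟶ Y) → Ext X Y 0` is additive. -/
lemma Ext_mk₀_add {C : Type*} [Category C] [Abelian C] [HasExt.{w} C] {X Y : C}
    (f g : X ⟶ Y) :
    Abelian.Ext.mk₀ (f + g) = Abelian.Ext.mk₀ f + Abelian.Ext.mk₀ g := by
  letI := HasDerivedCategory.standard C
  ext
  rw [Abelian.Ext.add_hom, Abelian.Ext.mk₀_hom, Abelian.Ext.mk₀_hom, Abelian.Ext.mk₀_hom,
    Functor.map_add]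
  dsimp [ShiftedHom.mk₀]
  rw [Preadditive.add_comp]

/-- The Ext-group `Ext_A^i (M, N)` for two left `A`-modules `M` and `N`. -/
noncomputable abbrev ExtGroup (A : Type u) [Ring A]
    (M : Type v) [AddCommGroup M] [Module A M]
    (N : Type w) [AddCommGroup N] [Module A N] (i : ℕ) :=
  Abelian.Ext (C := ModuleCat.{max v w u} A)
    (ModuleCat.of A (ULift.{max w u} M)) (ModuleCat.of A (ULift.{max v u} N)) i


/-- The injective dimension of `A` as a module over itself, an element of `ℕ∞`:
the least `n` such that `Ext_A^i (M, A) = 0` for all modules `M` and all `i > n`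
(and `∞` if there is no such `n`). -/
noncomputable def selfInjectiveDimension (A : Type u) [Ring A] : ℕ∞ :=
  sInf {d : ℕ∞ | ∃ n : ℕ, d = (n : ℕ∞) ∧
    ∀ (M : Type u) [AddCommGroup M] [Module A M],
      ∀ i : ℕ, n < i → Subsingleton (ExtGroup A M A i)}

/-!
Let `H → B` be the localization at a minimal prime, an Artinian local ring. Its residue field is
finitely generated over `k`: the kernel of `H ⊗ H → H` is generated by finitely many
`1 ⊗ a - a ⊗ 1`, because a coaction makes it the extension of the augmentation ideal of `H`, and
the images of those `a` generate the residue field. Hence `B` is finite over a purely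
transcendental extension `L = k(x₁, …, xₙ)` contained in it.

The kernel of the multiplication `L ⊗ B → B` is a localization of the ideal of a rational point of
affine `n`-space over `B`, and `L ⊗ B` is a localization of `L ⊗ H`, so
`Ext^{>n}_{L ⊗ H}(B, L ⊗ H) = 0`. On the other hand `B` is `(B ⊗ H) ⊗_H k` for a coaction
`H → B ⊗ H` twisted by `H → B`, and `H` is a direct summand of the `H`-module
`Hom_{L ⊗ H}(B ⊗ H, L ⊗ H)`; therefore `Ext^{>n}_H(k, H) = 0`.

After base change to `H ⧸ m`, translation by the tautological point moves the maximal ideal `m` to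
the augmentation ideal, so by flat descent every localization of `H` at a maximal ideal has
self-injective dimension at most `n`.
-/

open scoped TensorProduct

/-! ### Vanishing of Ext -/

/-- `Ext_R^i(X, N) = 0`. The modules share the universe of `R`, so that `Ext` can be taken there
too. -/
def ExtVanishes (R : Type u) [CommRing R] (X N : Type u) [AddCommGroup X] [Module R X]
    [AddCommGroup N] [Module R N] (i : ℕ) : Prop :=
  Subsingleton (Abelian.Ext.{u} (ModuleCat.of R X) (ModuleCat.of R N) i)

/-- `Ext_R^i(X, N) = 0` for all `i > d`. -/
def ExtVanishesAbove (R : Type u) [CommRing R] (X N : Type u) [AddCommGroup X] [Module R X]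
    [AddCommGroup N] [Module R N] (d : ℕ) : Prop :=
  ∀ i, d < i → ExtVanishes R X N i

section ExtVanishing

variable {R : Type u} [CommRing R] {X Y Z N N' : Type u} [AddCommGroup X] [Module R X]
  [AddCommGroup Y] [Module R Y] [AddCommGroup Z] [Module R Z] [AddCommGroup N] [Module R N]
  [AddCommGroup N'] [Module R N']

lemma shortExact_of_exact {a : Y →ₗ[R] Z} {b : Z →ₗ[R] X} (ha : Function.Injective a)
    (hb : Function.Surjective b) (hab : Function.Exact a b) :
    (ModuleCat.shortComplexOfCompEqZero a b hab.linearMap_comp_eq_zero).ShortExact :=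
  ModuleCat.shortComplex_shortExact _ hab ha hb

lemma ext_eq_zero_of_projective [Module.Projective R X] {i : ℕ}
    (e : Abelian.Ext.{u} (ModuleCat.of R X) (ModuleCat.of R N) (i + 1)) : e = 0 :=
  have := (IsProjective.iff_projective X).mp ‹_›
  Abelian.Ext.eq_zero_of_projective e

lemma extVanishes_of_projective [Module.Projective R X] (i : ℕ) : ExtVanishes R X N (i + 1) :=
  subsingleton_of_forall_eq 0 ext_eq_zero_of_projective

lemma extVanishesAbove_of_projective [Module.Projective R X] (d : ℕ) :
    ExtVanishesAbove R X N d := by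
  rintro (_ | i) hi
  · exact absurd hi (Nat.not_lt_zero d)
  · exact extVanishes_of_projective i

lemma ExtVanishes.congr_left {i : ℕ} (h : ExtVanishes R X N i) (e : X ≃ₗ[R] Y) :
    ExtVanishes R Y N i :=
  (((Abelian.extFunctor.{u} i).mapIso e.symm.toModuleIso.op).app (ModuleCat.of R N)
    |>.addCommGroupIsoToAddEquiv).subsingleton_congr.1 h

lemma ExtVanishes.congr_right {i : ℕ} (h : ExtVanishes R X N i) (e : N ≃ₗ[R] N') :
    ExtVanishes R X N' i :=
  (((Abelian.extFunctor.{u} i).obj (.op (ModuleCat.of R X))).mapIso e.toModuleIso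
    |>.addCommGroupIsoToAddEquiv).subsingleton_congr.1 h

variable (R X N) in
/-- `Ext⁰` is `Hom`. -/
noncomputable def extZeroEquiv :
    Abelian.Ext.{u} (ModuleCat.of R X) (ModuleCat.of R N) 0 ≃ₗ[R] (X →ₗ[R] N) :=
  Abelian.Ext.linearEquiv₀ (R := R) ≪≫ₗ
    ModuleCat.homLinearEquiv (S := R) (M := .of R X) (N := .of R N)

section LongExactSequence

variable {a : Y →ₗ[R] Z} {b : Z →ₗ[R] X} (ha : Function.Injective a)
  (hb : Function.Surjective b) (hab : Function.Exact a b)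
include ha hb hab

lemma ExtVanishes.of_exact₂ {i : ℕ} (hY : ExtVanishes R Y N i) (hX : ExtVanishes R X N i) :
    ExtVanishes R Z N i := by
  refine subsingleton_of_forall_eq 0 fun e => ?_
  obtain ⟨x, rfl⟩ := Abelian.Ext.contravariant_sequence_exact₂ (shortExact_of_exact ha hb hab)
    _ e (hY.elim _ _)
  rw [show x = 0 from hX.elim _ _, Abelian.Ext.comp_zero]

lemma ExtVanishes.of_exact₃ {i : ℕ} (hY : ExtVanishes R Y N i)
    (hZ : ExtVanishes R Z N (i + 1)) : ExtVanishes R X N (i + 1) := by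
  refine subsingleton_of_forall_eq 0 fun e => ?_
  obtain ⟨x, rfl⟩ := Abelian.Ext.contravariant_sequence_exact₃ (shortExact_of_exact ha hb hab)
    _ e (hZ.elim _ _) (Nat.add_comm 1 i)
  rw [show x = 0 from hY.elim _ _, Abelian.Ext.comp_zero]

variable (N) in
/-- The connecting map `Hom(Y, N) → Ext¹(X, N)` of a short exact sequence `0 → Y → Z → X → 0`. -/
noncomputable def extConnecting :
    (Y →ₗ[R] N) →ₗ[R] Abelian.Ext.{u} (ModuleCat.of R X) (ModuleCat.of R N) 1 :=
  (shortExact_of_exact ha hb hab).extClass.{u}.precompOfLinear R (ModuleCat.of R N) (add_zero 1) ∘ₗ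
    (extZeroEquiv R Y N).symm.toLinearMap

lemma exact_lcomp_extConnecting :
    Function.Exact (LinearMap.lcomp R N a) (extConnecting N ha hb hab) := by
  have hS := shortExact_of_exact ha hb hab
  intro f
  constructor
  · intro hf
    obtain ⟨x, hx⟩ := Abelian.Ext.contravariant_sequence_exact₁ hS (ModuleCat.of R N)
      (Abelian.Ext.mk₀.{u} (ModuleCat.ofHom f)) (add_zero 1) hf
    obtain ⟨g, rfl⟩ := (Abelian.Ext.mk₀_bijective _ _).2 x
    rw [Abelian.Ext.mk₀_comp_mk₀] at hx
    exact ⟨g.hom, congrArg ModuleCat.Hom.hom ((Abelian.Ext.mk₀_bijective _ _).1 hx)⟩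
  · rintro ⟨g, rfl⟩
    change hS.extClass.{u}.comp (Abelian.Ext.mk₀.{u} (ModuleCat.ofHom a ≫ ModuleCat.ofHom g))
      (add_zero 1) = 0
    rw [← Abelian.Ext.mk₀_comp_mk₀]
    exact ShortComplex.ShortExact.extClass_comp_assoc.{u} hS _

variable [Module.Projective R Z]

lemma extConnecting_surjective : Function.Surjective (extConnecting N ha hb hab) := by
  intro e
  obtain ⟨x, rfl⟩ := Abelian.Ext.contravariant_sequence_exact₃ (shortExact_of_exact ha hb hab)
    _ e (ext_eq_zero_of_projective _) (add_zero 1)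
  obtain ⟨f, rfl⟩ := (Abelian.Ext.mk₀_bijective _ _).2 x
  exact ⟨f.hom, rfl⟩

lemma extVanishes_one_iff :
    ExtVanishes R X N 1 ↔ Function.Surjective (LinearMap.lcomp R N a) := by
  rw [← LinearMap.range_eq_top, ← (exact_lcomp_extConnecting ha hb hab).linearMap_ker_eq,
    LinearMap.ker_eq_top]
  refine ⟨fun h => LinearMap.ext fun _ => h.elim _ _,
    fun h => subsingleton_of_forall_eq 0 fun e => ?_⟩
  obtain ⟨f, rfl⟩ := extConnecting_surjective ha hb hab e
  rw [h, LinearMap.zero_apply]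

variable (N) in
lemma bijective_precompOfLinear_extClass (i : ℕ) :
    Function.Bijective ((shortExact_of_exact ha hb hab).extClass.{u}.precompOfLinear R
      (ModuleCat.of R N) (Nat.add_comm 1 (i + 1))) := by
  have hS := shortExact_of_exact ha hb hab
  refine ⟨(injective_iff_map_eq_zero _).2 fun e he => ?_, fun e => ?_⟩
  · obtain ⟨x, rfl⟩ := Abelian.Ext.contravariant_sequence_exact₁ hS _ e
      (Nat.add_comm 1 (i + 1)) he
    rw [ext_eq_zero_of_projective x, Abelian.Ext.comp_zero]
  · exact Abelian.Ext.contravariant_sequence_exact₃ hS _ e (ext_eq_zero_of_projective _)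
      (Nat.add_comm 1 (i + 1))

variable (N) in
/-- Dimension shifting. -/
noncomputable def extShift (i : ℕ) :
    Abelian.Ext.{u} (ModuleCat.of R Y) (ModuleCat.of R N) (i + 1) ≃ₗ[R]
      Abelian.Ext.{u} (ModuleCat.of R X) (ModuleCat.of R N) (i + 2) :=
  .ofBijective _ (bijective_precompOfLinear_extClass N ha hb hab i)

lemma extVanishes_succ_iff {i : ℕ} :
    ExtVanishes R X N (i + 2) ↔ ExtVanishes R Y N (i + 1) :=
  (extShift N ha hb hab i).toEquiv.subsingleton_congr.symm

end LongExactSequence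
end ExtVanishing

section FlatBaseChange

lemma nonempty_linearEquiv_of_exact_of_surjective {S M₁ M₂ M₃ M₁' M₂' M₃' : Type*} [CommRing S]
    [AddCommGroup M₁] [Module S M₁] [AddCommGroup M₂] [Module S M₂] [AddCommGroup M₃] [Module S M₃]
    [AddCommGroup M₁'] [Module S M₁'] [AddCommGroup M₂'] [Module S M₂'] [AddCommGroup M₃']
    [Module S M₃'] {f : M₁ →ₗ[S] M₂} {g : M₂ →ₗ[S] M₃} {f' : M₁' →ₗ[S] M₂'} {g' : M₂' →ₗ[S] M₃'}
    (hfg : Function.Exact f g) (hg : Function.Surjective g) (hfg' : Function.Exact f' g')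
    (hg' : Function.Surjective g') (e₁ : M₁ ≃ₗ[S] M₁') (e₂ : M₂ ≃ₗ[S] M₂')
    (h : f' ∘ₗ e₁.toLinearMap = e₂.toLinearMap ∘ₗ f) : Nonempty (M₃ ≃ₗ[S] M₃') := by
  have hrange : (LinearMap.range f).map (e₂ : M₂ →ₗ[S] M₂') = LinearMap.range f' := by
    rw [← LinearMap.range_comp, ← h, LinearMap.range_comp_of_range_eq_top _ e₁.range]
  exact ⟨(hfg.linearEquivOfSurjective hg).symm ≪≫ₗ Submodule.Quotient.equiv _ _ e₂ hrange ≪≫ₗ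
    hfg'.linearEquivOfSurjective hg'⟩

variable {R : Type u} [CommRing R] (R' : Type u) [CommRing R'] [Algebra R R'] [Module.Flat R R']
  {X Y P N : Type u} [AddCommGroup X] [Module R X] [AddCommGroup Y] [Module R Y]
  [AddCommGroup P] [Module R P] [AddCommGroup N] [Module R N]

section

variable {a : Y →ₗ[R] P} {b : P →ₗ[R] X} (ha : Function.Injective a)
  (hb : Function.Surjective b) (hab : Function.Exact a b)
include ha hb hab

variable (N) in
lemma nonempty_baseChange_ext_one_linearEquiv [Module.Projective R P]
    [Module.FinitePresentation R Y] [Module.FinitePresentation R P] :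
    Nonempty (R' ⊗[R] Abelian.Ext.{u} (ModuleCat.of R X) (ModuleCat.of R N) 1 ≃ₗ[R']
      Abelian.Ext.{u} (ModuleCat.of R' (R' ⊗[R] X)) (ModuleCat.of R' (R' ⊗[R] N)) 1) := by
  have ha' : Function.Injective (a.baseChange R') :=
    Module.Flat.lTensor_preserves_injective_linearMap a ha
  have hb' : Function.Surjective (b.baseChange R') := LinearMap.lTensor_surjective R' hb
  have hab' : Function.Exact (a.baseChange R') (b.baseChange R') := lTensor_exact R' hab hb
  have hc := extConnecting_surjective (N := N) ha hb hab
  refine nonempty_linearEquiv_of_exact_of_surjective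
    (f := (LinearMap.lcomp R N a).baseChange R') (g := (extConnecting N ha hb hab).baseChange R')
    (lTensor_exact R' (exact_lcomp_extConnecting ha hb hab) hc) (LinearMap.lTensor_surjective R' hc)
    (exact_lcomp_extConnecting ha' hb' hab') (extConnecting_surjective ha' hb' hab')
    (Module.FinitePresentation.isBaseChange_map R P N R').equiv
    (Module.FinitePresentation.isBaseChange_map R Y N R').equiv
    (TensorProduct.AlgebraTensorModule.curry_injective (LinearMap.ext fun s => LinearMap.ext
      fun f => TensorProduct.AlgebraTensorModule.curry_injective (LinearMap.ext fun s' =>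
        LinearMap.ext fun y => ?_)))
  simp [IsBaseChange.equiv_tmul]

end

theorem nonempty_baseChange_ext_linearEquiv [IsNoetherianRing R] [Module.Finite R X] (i : ℕ) :
    Nonempty (R' ⊗[R] Abelian.Ext.{u} (ModuleCat.of R X) (ModuleCat.of R N) i ≃ₗ[R']
      Abelian.Ext.{u} (ModuleCat.of R' (R' ⊗[R] X)) (ModuleCat.of R' (R' ⊗[R] N)) i) := by
  obtain _ | i := i
  · have := Module.finitePresentation_of_finite R X
    exact ⟨(extZeroEquiv R X N).baseChange R R' _ _ ≪≫ₗ
      (Module.FinitePresentation.isBaseChange_map R X N R').equiv ≪≫ₗ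
      (extZeroEquiv R' (R' ⊗[R] X) (R' ⊗[R] N)).symm⟩
  induction i generalizing X with
  | zero =>
    obtain ⟨P, _, _, _, _, b, hb⟩ := Module.exists_finite_presentation R X
    have := Module.finitePresentation_of_finite R P
    have := Module.finitePresentation_of_finite R b.ker
    exact nonempty_baseChange_ext_one_linearEquiv R' N b.ker.injective_subtype hb
      b.exact_subtype_ker_map
  | succ i ih =>
    obtain ⟨P, _, _, _, _, b, hb⟩ := Module.exists_finite_presentation R X
    have hab := b.exact_subtype_ker_map
    obtain ⟨e⟩ := ih (X := b.ker)
    exact ⟨(extShift N b.ker.injective_subtype hb hab i).symm.baseChange R R' _ _ ≪≫ₗ e ≪≫ₗ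
      extShift (a := b.ker.subtype.baseChange R') (b := b.baseChange R') (R' ⊗[R] N)
        (Module.Flat.lTensor_preserves_injective_linearMap _ b.ker.injective_subtype)
        (LinearMap.lTensor_surjective R' hb) (lTensor_exact R' hab hb) i⟩

lemma extVanishes_baseChange_iff [IsNoetherianRing R] [Module.Finite R X] {i : ℕ} :
    ExtVanishes R' (R' ⊗[R] X) (R' ⊗[R] N) i ↔
      Subsingleton (R' ⊗[R] Abelian.Ext.{u} (ModuleCat.of R X) (ModuleCat.of R N) i) :=
  (nonempty_baseChange_ext_linearEquiv R' i).some.toEquiv.subsingleton_congr.symm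

lemma ExtVanishes.baseChange [IsNoetherianRing R] [Module.Finite R X] {i : ℕ}
    (h : ExtVanishes R X R i) : ExtVanishes R' (R' ⊗[R] X) R' i := by
  have : Subsingleton (Abelian.Ext.{u} (ModuleCat.of R X) (ModuleCat.of R R) i) := h
  exact ((extVanishes_baseChange_iff R').2 inferInstance).congr_right
    (TensorProduct.AlgebraTensorModule.rid R R' R')

omit [Module.Flat R R'] in
lemma ExtVanishes.of_baseChange [IsNoetherianRing R] [Module.Finite R X]
    [Module.FaithfullyFlat R R'] {i : ℕ} (h : ExtVanishes R' (R' ⊗[R] X) R' i) :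
    ExtVanishes R X R i :=
  (Module.FaithfullyFlat.subsingleton_tensorProduct_iff_right R R').1
    ((extVanishes_baseChange_iff R').1
      (h.congr_right (TensorProduct.AlgebraTensorModule.rid R R' R').symm))

end FlatBaseChange

/-! ### Injective dimension of noetherian local rings -/

section Devissage

open scoped Pointwise

variable {R : Type u} [CommRing R] {X N : Type u} [AddCommGroup X] [Module R X]
  [AddCommGroup N] [Module R N]

lemma extVanishes_of_forall_prime [IsNoetherianRing R] [Module.Finite R X] {i : ℕ}
    (h : ∀ p : Ideal R, p.IsPrime → Module.annihilator R X ≤ p → ExtVanishes R (R ⧸ p) N (i + 1)) :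
    ExtVanishes R X N (i + 1) := by
  refine IsNoetherianRing.induction_on_isQuotientEquivQuotientPrime R ‹_›
    (motive := fun Z _ _ _ => Module.annihilator R X ≤ Module.annihilator R Z →
      ExtVanishes R Z N (i + 1)) ?_ ?_ ?_ le_rfl
  · intro Z _ _ _ _ _
    exact extVanishes_of_projective i
  · intro Z _ _ _ p e hZ
    rw [e.annihilator_eq, Ideal.annihilator_quotient] at hZ
    exact (h p.1 p.2 hZ).congr_left e.symm
  · intro Z₁ _ _ _ Z₂ _ _ _ Z₃ _ _ _ f g hf hg hfg h₁ h₃ hZ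
    exact .of_exact₂ hf hg hfg (h₁ (hZ.trans (f.annihilator_le_of_injective hf)))
      (h₃ (hZ.trans (g.annihilator_le_of_surjective hg)))

lemma smul_surjective_of_extVanishes {x : R} (hx : IsSMulRegular X x) {i : ℕ}
    (h : ExtVanishes R (X ⧸ x • (⊤ : Submodule R X)) N (i + 1))
    (e : Abelian.Ext.{u} (ModuleCat.of R X) (ModuleCat.of R N) i) : ∃ e', x • e' = e := by
  obtain ⟨e', rfl⟩ := Abelian.Ext.contravariant_sequence_exact₁
    (IsSMulRegular.smulShortComplex_shortExact (M := ModuleCat.of R X) hx) _ e (Nat.add_comm 1 i)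
    (h.elim _ _)
  refine ⟨e', ?_⟩
  change Abelian.Ext.{u} (ModuleCat.of R X) (ModuleCat.of R N) i at e'
  change x • e' = (Abelian.Ext.mk₀.{u} (x • 𝟙 (ModuleCat.of R X))).comp e' (zero_add i)
  rw [Abelian.Ext.mk₀_smul, Abelian.Ext.smul_comp, Abelian.Ext.mk₀_id_comp]

variable [IsNoetherianRing R] [IsLocalRing R] [Module.Finite R X] [Module.Finite R N]

lemma ExtVanishes.of_quotient_smul_top {x : R} (hx : IsSMulRegular X x)
    (hxm : x ∈ IsLocalRing.maximalIdeal R) {i : ℕ}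
    (h : ExtVanishes R (X ⧸ x • (⊤ : Submodule R X)) N (i + 1)) : ExtVanishes R X N i := by
  have : Module.Finite R (Abelian.Ext.{u} (ModuleCat.of R X) (ModuleCat.of R N) i) :=
    ModuleCat.finite_ext R _ _ _
  have hbot := Submodule.eq_bot_of_le_smul_of_le_jacobson_bot (IsLocalRing.maximalIdeal R)
    (⊤ : Submodule R (Abelian.Ext.{u} (ModuleCat.of R X) (ModuleCat.of R N) i)) this.1 (by
      intro e _
      obtain ⟨e', rfl⟩ := smul_surjective_of_extVanishes hx h e
      exact Submodule.smul_mem_smul hxm trivial) (IsLocalRing.maximalIdeal_le_jacobson _)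
  exact (Submodule.subsingleton_iff R).1 (subsingleton_of_bot_eq_top hbot.symm)

lemma extVanishesAbove_quotient_prime {d : ℕ}
    (h : ExtVanishesAbove R (R ⧸ IsLocalRing.maximalIdeal R) N d) (p : Ideal R) (hp : p.IsPrime) :
    ExtVanishesAbove R (R ⧸ p) N d := by
  induction p using WellFoundedGT.induction with
  | ind p ih =>
  by_cases hmax : IsLocalRing.maximalIdeal R ≤ p
  · rwa [← (IsLocalRing.maximalIdeal.isMaximal R).eq_of_le hp.ne_top hmax]
  obtain ⟨x, hxm, hxp⟩ := SetLike.not_le_iff_exists.1 hmax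
  have hreg : IsSMulRegular (R ⧸ p) x := by
    refine (isSMulRegular_iff_right_eq_zero_of_smul).2 fun y hy => ?_
    obtain ⟨y, rfl⟩ := Ideal.Quotient.mk_surjective y
    rw [Algebra.smul_def] at hy
    exact (mul_eq_zero.1 hy).resolve_left (mt Ideal.Quotient.eq_zero_iff_mem.1 hxp)
  intro i hi
  refine .of_quotient_smul_top hreg hxm (extVanishes_of_forall_prime fun q hq hle => ?_)
  have hpq : p ≤ q := by
    refine le_trans ?_ hle
    exact (Ideal.annihilator_quotient (I := p)).ge.trans
      (LinearMap.annihilator_le_of_surjective _ (Submodule.mkQ_surjective _))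
  have hxq : x ∈ q := hle <| Module.mem_annihilator.2 fun y => by
    obtain ⟨y, rfl⟩ := Submodule.mkQ_surjective _ y
    exact (Submodule.Quotient.mk_eq_zero _).2 (Submodule.smul_mem_pointwise_smul y x ⊤ trivial)
  exact ih q (lt_of_le_of_ne hpq fun hpq => hxp (hpq ▸ hxq)) hq _ (hi.trans i.lt_succ_self)

theorem extVanishesAbove_of_residue {d : ℕ}
    (h : ExtVanishesAbove R (R ⧸ IsLocalRing.maximalIdeal R) N d) : ExtVanishesAbove R X N d := by
  rintro (_ | i) hi
  · exact absurd hi (Nat.not_lt_zero d)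
  · exact extVanishes_of_forall_prime fun p hp _ => extVanishesAbove_quotient_prime h p hp _ hi

end Devissage

theorem hasInjectiveDimensionLE_of_extVanishes {R : Type u} [CommRing R] {d : ℕ}
    {N : ModuleCat.{u} R} (h : ∀ J : Ideal R, ExtVanishes R (R ⧸ J) N (d + 1)) :
    HasInjectiveDimensionLE N d := by
  induction d generalizing N with
  | zero =>
    have hbaer : Module.Baer R N := by
      intro J g
      obtain ⟨g', hg'⟩ := (extVanishes_one_iff J.injective_subtype J.mkQ_surjective
        (LinearMap.exact_subtype_mkQ J)).1 (h J) g
      exact ⟨g', fun x hx => LinearMap.congr_fun hg' ⟨x, hx⟩⟩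
    have := Module.injective_iff_injective_object R N |>.1 hbaer.injective
    rwa [HasInjectiveDimensionLE, zero_add, ← injective_iff_hasInjectiveDimensionLT_one]
  | succ d ih =>
    obtain ⟨I, _, f, _⟩ := (inferInstance : EnoughInjectives (ModuleCat.{u} R)).1 N
    have hS : (ShortComplex.mk f (Limits.cokernel.π f) (Limits.cokernel.condition f)).ShortExact :=
      { exact := ShortComplex.exact_cokernel f }
    refine (hS.hasInjectiveDimensionLT_X₃_iff d ‹_›).1
      (ih fun J => subsingleton_of_forall_eq 0 fun e => ?_)
    obtain ⟨x, rfl⟩ := Abelian.Ext.covariant_sequence_exact₃ _ hS e rfl ((h J).elim _ _)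
    rw [Abelian.Ext.eq_zero_of_injective (I := I) x, Abelian.Ext.zero_comp]

/-! ### Points, translations and coactions -/

lemma flat_includeRight (k A B : Type*) [CommRing k] [CommRing A] [Algebra k A] [CommRing B]
    [Algebra k B] [Module.Flat k A] :
    (Algebra.TensorProduct.includeRight : B →ₐ[k] A ⊗[k] B).toRingHom.Flat :=
  (RingHom.flat_algebraMap_iff.2 (inferInstanceAs (Module.Flat B (B ⊗[k] A)))).comp
    (.of_bijective (Algebra.TensorProduct.comm k B A).bijective)

section TwistedCoaction

variable {k H C : Type*} [CommRing k] [CommRing H] [CommRing C] [Algebra k C]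

section Bialgebra

variable [Bialgebra k H]

variable (k H) in
/-- The augmentation ideal of a bialgebra, the kernel of its counit. -/
noncomputable def augmentationIdeal : Ideal H := RingHom.ker (Bialgebra.counitAlgHom k H)

/-- The `C`-point of `C ⊗ H` attached to a `C`-valued point `φ` of `H`, that is
`c ⊗ h ↦ c φ(h)`. -/
noncomputable def evalPoint (φ : WithConv (H →ₐ[k] C)) : C ⊗[k] H →ₐ[C] C :=
  Algebra.TensorProduct.lift (AlgHom.id C C) φ.ofConv fun _ _ => Commute.all _ _

@[simp] lemma evalPoint_tmul (φ : WithConv (H →ₐ[k] C)) (c : C) (h : H) :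
    evalPoint φ (c ⊗ₜ h) = c * φ h := by
  simp [evalPoint]

lemma evalPoint_surjective (φ : WithConv (H →ₐ[k] C)) : Function.Surjective (evalPoint φ) :=
  fun c => ⟨c ⊗ₜ 1, by simp⟩

lemma ker_evalPoint_one : RingHom.ker (evalPoint (1 : WithConv (H →ₐ[k] C))) =
    (augmentationIdeal k H).map (Algebra.TensorProduct.includeRight : H →ₐ[k] C ⊗[k] H) := by
  have hsurj : Function.Surjective (Bialgebra.counitAlgHom k H) := fun a =>
    ⟨algebraMap k H a, by simp⟩
  have h : evalPoint (1 : WithConv (H →ₐ[k] C)) = (Algebra.TensorProduct.rid k C C).toAlgHom.comp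
      (Algebra.TensorProduct.map (AlgHom.id C C) (Bialgebra.counitAlgHom k H)) := by
    ext h
    simp [Algebra.smul_def]
  rw [augmentationIdeal, ← Algebra.TensorProduct.lTensor_ker _ hsurj, h]
  exact RingHom.ker_equiv_comp _ (Algebra.TensorProduct.rid k C C).toRingEquiv

/-- Translation by a `C`-valued point `φ`, that is `c ⊗ h ↦ ∑ c φ(h₂) ⊗ h₁`. -/
noncomputable def translation (φ : WithConv (H →ₐ[k] C)) : C ⊗[k] H →ₐ[C] C ⊗[k] H :=
  Algebra.TensorProduct.lift (Algebra.ofId C _)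
    ((Algebra.TensorProduct.map φ.ofConv (AlgHom.id k H)).comp
      ((Algebra.TensorProduct.comm k H H).toAlgHom.comp (Bialgebra.comulAlgHom k H)))
    fun _ _ => Commute.all _ _

lemma translation_tmul (φ : WithConv (H →ₐ[k] C)) (c : C) {h : H} {ι : Type*}
    (r : Coalgebra.Repr k h ι) :
    translation φ (c ⊗ₜ h) = ∑ i ∈ r.index, (c * φ (r.right i)) ⊗ₜ r.left i := by
  simp [translation, Algebra.ofId_apply, ← r.eq, Finset.mul_sum]

lemma convMul_apply_eq_sum (φ ψ : WithConv (H →ₐ[k] C)) {h : H} {ι : Type*}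
    (r : Coalgebra.Repr k h ι) :
    (φ * ψ) h = ∑ i ∈ r.index, φ (r.left i) * ψ (r.right i) := by
  simp [AlgHom.convMul_apply, ← r.eq]

lemma evalPoint_comp_translation (φ ψ : WithConv (H →ₐ[k] C)) :
    (evalPoint φ).comp (translation ψ) = evalPoint (φ * ψ) := by
  ext h
  let r := Coalgebra.Repr.arbitrary k h
  simp [translation_tmul ψ 1 r, convMul_apply_eq_sum φ ψ r, mul_comm]

lemma translation_one : translation (1 : WithConv (H →ₐ[k] C)) = AlgHom.id C _ := by
  ext h
  let r := Coalgebra.Repr.arbitrary k h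
  have hr := congrArg (TensorProduct.map (Algebra.linearMap k C) LinearMap.id ∘
    TensorProduct.comm k H k) (Coalgebra.sum_tmul_counit_eq r)
  simp only [Function.comp_apply, map_sum, TensorProduct.comm_tmul, TensorProduct.map_tmul,
    Algebra.linearMap_apply, LinearMap.id_apply, map_one] at hr
  simpa [translation_tmul _ (1 : C) r] using hr

lemma translation_mul (φ ψ : WithConv (H →ₐ[k] C)) :
    translation (φ * ψ) = (translation φ).comp (translation ψ) := by
  ext h
  let r := Coalgebra.Repr.arbitrary k h
  let rl (i : H × H) := Coalgebra.Repr.arbitrary k (r.left i)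
  let rr (i : H × H) := Coalgebra.Repr.arbitrary k (r.right i)
  have hr := congrArg (TensorProduct.comm k H C ∘ TensorProduct.map LinearMap.id
    (LinearMap.mul' k C ∘ₗ TensorProduct.map φ.ofConv.toLinearMap ψ.ofConv.toLinearMap))
    (Coalgebra.sum_tmul_tmul_eq r rl rr)
  simp only [Function.comp_apply, map_sum, TensorProduct.map_tmul, LinearMap.id_apply,
    LinearMap.comp_apply, LinearMap.mul'_apply, TensorProduct.comm_tmul, AlgHom.toLinearMap_apply]
    at hr
  simp only [AlgHom.coe_comp, AlgHom.coe_restrictScalars', Function.comp_apply,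
    Algebra.TensorProduct.includeRight_apply, translation_tmul _ _ r, one_mul, map_sum,
    convMul_apply_eq_sum φ ψ (rr _), TensorProduct.sum_tmul, translation_tmul φ _ (rl _)]
  simpa [mul_comm] using hr.symm

end Bialgebra

variable [HopfAlgebra k H]

lemma toConv_mul_comp_antipode (π : H →ₐ[k] C) :
    WithConv.toConv π * WithConv.toConv (π.comp (HopfAlgebra.antipodeAlgHom k H)) = 1 := by
  have h := AlgHom.comp_convMul_distrib π (.toConv (AlgHom.id k H)) (.toConv (AlgHom.id k H))⁻¹
  rw [mul_inv_cancel] at h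
  refine .trans (congrArg WithConv.toConv h.symm) ?_
  ext; simp

lemma comp_antipode_mul_toConv (π : H →ₐ[k] C) :
    WithConv.toConv (π.comp (HopfAlgebra.antipodeAlgHom k H)) * WithConv.toConv π = 1 := by
  have h := AlgHom.comp_convMul_distrib π (.toConv (AlgHom.id k H))⁻¹ (.toConv (AlgHom.id k H))
  rw [inv_mul_cancel] at h
  refine .trans (congrArg WithConv.toConv h.symm) ?_
  ext; simp

/-- Translation by a point `π`, inverse to the translation by `π ∘ S`. -/
noncomputable def translationEquiv (π : H →ₐ[k] C) : C ⊗[k] H ≃ₐ[C] C ⊗[k] H :=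
  AlgEquiv.ofAlgHom (translation (.toConv π))
    (translation (.toConv (π.comp (HopfAlgebra.antipodeAlgHom k H))))
    (by rw [← translation_mul, toConv_mul_comp_antipode, translation_one])
    (by rw [← translation_mul, comp_antipode_mul_toConv, translation_one])

variable (π : H →ₐ[k] C)

/-- The coaction `h ↦ ∑ π(S h₂) ⊗ h₁`, which embeds `H` into `C ⊗ H` as the translate of `1 ⊗ H` by
`π`. -/
noncomputable def twistedCoaction : H →ₐ[k] C ⊗[k] H :=
  ((translationEquiv π).symm.toAlgHom.restrictScalars k).comp Algebra.TensorProduct.includeRight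

lemma translationEquiv_twistedCoaction (h : H) :
    translationEquiv π (twistedCoaction π h) = 1 ⊗ₜ h := by
  simp [twistedCoaction]

lemma flat_twistedCoaction [Module.Flat k C] : (twistedCoaction π).toRingHom.Flat :=
  (flat_includeRight k C H).comp (.of_bijective (translationEquiv π).symm.bijective)

lemma ker_evalPoint :
    RingHom.ker (evalPoint (.toConv π)) = (augmentationIdeal k H).map (twistedCoaction π) := by
  have h : evalPoint (.toConv π) = (evalPoint 1).comp (translationEquiv π).toAlgHom := by
    rw [← one_mul (WithConv.toConv π), ← evalPoint_comp_translation]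
    rfl
  calc RingHom.ker (evalPoint (.toConv π))
      = (RingHom.ker (evalPoint (1 : WithConv (H →ₐ[k] C)))).comap
          (translationEquiv π).toRingEquiv := by rw [h]; rfl
    _ = ((augmentationIdeal k H).map
          (Algebra.TensorProduct.includeRight : H →ₐ[k] C ⊗[k] H).toRingHom).map
          (translationEquiv π).toRingEquiv.symm.toRingHom := by
        rw [ker_evalPoint_one]
        exact (Ideal.map_symm (translationEquiv π).toRingEquiv).symm
    _ = (augmentationIdeal k H).map (twistedCoaction π) := Ideal.map_map _ _

end TwistedCoaction

/-! ### Residue fields and local injective dimensions -/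

section EssentiallyFiniteType

variable {k A K : Type*} [Field k] [CommRing A] [Algebra k A] [Field K] [Algebra k K]

/-- Over a field `L`, an element `x` of an extension with `1 ⊗ x = x ⊗ 1` lies in `L`, so the map
`A ⊗ A → K ⊗_L K` induced by `π` kills `1 ⊗ a - a ⊗ 1` exactly when `π a ∈ L`. -/
lemma map_mem_of_span_eq_kaehlerIdeal {s : Set A}
    (hs : Ideal.span ((fun a => 1 ⊗ₜ[k] a - a ⊗ₜ[k] 1) '' s) = KaehlerDifferential.ideal k A)
    (π : A →ₐ[k] K) (L : IntermediateField k K) (hL : ∀ a ∈ s, π a ∈ L) (a : A) : π a ∈ L := by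
  let Φ : A ⊗[k] A →ₐ[k] K ⊗[L] K := Algebra.TensorProduct.lift
    ((Algebra.TensorProduct.includeLeft (R := L) (S := k)).comp π)
    (((Algebra.TensorProduct.includeRight (R := L)).restrictScalars k).comp π)
    fun _ _ => Commute.all _ _
  have hΦ (a : A) : Φ (1 ⊗ₜ[k] a - a ⊗ₜ[k] 1) = 1 ⊗ₜ π a - π a ⊗ₜ 1 := by simp [Φ]
  have hker : KaehlerDifferential.ideal k A ≤ RingHom.ker Φ := by
    rw [← hs, Ideal.span_le]
    rintro _ ⟨b, hb, rfl⟩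
    rw [SetLike.mem_coe, RingHom.mem_ker, hΦ, sub_eq_zero]
    exact (Algebra.TensorProduct.tmul_one_eq_one_tmul (⟨π b, hL b hb⟩ : L)).symm
  have ha : Φ (1 ⊗ₜ[k] a - a ⊗ₜ[k] 1) = 0 :=
    hker (KaehlerDifferential.one_smul_sub_smul_one_mem_ideal k a)
  rw [hΦ, sub_eq_zero] at ha
  have : π a ∈ Set.range (algebraMap L K) := by
    rw [← (Algebra.IsEffective.of_faithfullyFlat L K).eqLocus_includeLeft_includeRight]
    exact ha.symm
  obtain ⟨y, hy⟩ := this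
  exact hy ▸ y.2

lemma essFiniteType_of_adjoin_range_eq_top (hfg : (KaehlerDifferential.ideal k A).FG)
    (π : A →ₐ[k] K) (hπ : IntermediateField.adjoin k (Set.range π) = ⊤) :
    Algebra.EssFiniteType k K := by
  classical
  rw [← KaehlerDifferential.span_range_eq_ideal, ← Set.image_univ] at hfg
  obtain ⟨t, ht, hspan⟩ := (Submodule.fg_span_iff_fg_span_finset_subset _).1 hfg
  obtain ⟨s, -, rfl⟩ := Finset.subset_set_image_iff.1 ht
  have hs : Ideal.span ((fun a => 1 ⊗ₜ[k] a - a ⊗ₜ[k] 1) '' (s : Set A)) =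
      KaehlerDifferential.ideal k A := by
    rw [← Finset.coe_image, ← KaehlerDifferential.span_range_eq_ideal, ← Set.image_univ]
    exact hspan.symm
  let L := IntermediateField.adjoin k (π '' s)
  have hL : L = ⊤ := by
    rw [eq_top_iff, ← hπ, IntermediateField.adjoin_le_iff, Set.range_subset_iff]
    exact map_mem_of_span_eq_kaehlerIdeal hs π L
      fun a ha => IntermediateField.subset_adjoin k _ ⟨a, ha, rfl⟩
  rw [← IntermediateField.fg_top_iff, ← hL]
  exact IntermediateField.fg_adjoin_of_finite (s.finite_toSet.image π)

end EssentiallyFiniteType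

lemma fg_kaehlerIdeal (k H : Type*) [CommRing k] [CommRing H] [HopfAlgebra k H]
    [IsNoetherianRing H] : (KaehlerDifferential.ideal k H).FG := by
  have h : KaehlerDifferential.ideal k H =
      RingHom.ker (evalPoint (.toConv (AlgHom.id k H))) := rfl
  rw [h, ker_evalPoint]
  exact Ideal.FG.map (IsNoetherian.noetherian _) (twistedCoaction (AlgHom.id k H)).toRingHom

section FlatExtension

variable {R S : Type u} [CommRing R] [IsNoetherianRing R] [CommRing S]

lemma ExtVanishesAbove.quotient_map {f : R →+* S} (hf : f.Flat) {J : Ideal R} {d : ℕ}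
    (h : ExtVanishesAbove R (R ⧸ J) R d) : ExtVanishesAbove S (S ⧸ J.map f) S d := by
  let _ := f.toAlgebra
  have : Module.Flat R S := hf
  exact fun i hi => ((h i hi).baseChange S).congr_left
    (Algebra.TensorProduct.quotIdealMapEquivTensorQuot S J).symm.toLinearEquiv

lemma ExtVanishes.of_flat_localHom [IsLocalRing R] [IsLocalRing S] {f : R →+* S} (hf : f.Flat)
    [IsLocalHom f] {i : ℕ}
    (h : ∀ (Y : Type u) [AddCommGroup Y] [Module S Y] [Module.Finite S Y], ExtVanishes S Y S i)
    (X : Type u) [AddCommGroup X] [Module R X] [Module.Finite R X] : ExtVanishes R X R i := by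
  let _ := f.toAlgebra
  have : Module.Flat R S := hf
  have : IsLocalHom (algebraMap R S) := ‹IsLocalHom f›
  have := Module.FaithfullyFlat.of_flat_of_isLocalHom (A := R) (B := S)
  exact ExtVanishes.of_baseChange S (h _)

/-- Flat base change along `ρ` carries the bound from `J` to `S_m`, whose maximal ideal is extended
from `J`, and faithfully flat descent along `ι` carries it on to `R_p`. -/
lemma extVanishesAbove_atPrime_of_flat_pair [IsNoetherianRing S] {ρ ι : R →+* S} (hρ : ρ.Flat)
    (hι : ι.Flat) {J : Ideal R} {d : ℕ} (hJ : ExtVanishesAbove R (R ⧸ J) R d) (m : Ideal S)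
    [m.IsMaximal] (hm : m = J.map ρ) (p : Ideal R) [p.IsPrime] (hp : p = m.comap ι)
    (X : Type u) [AddCommGroup X] [Module (Localization.AtPrime p) X]
    [Module.Finite (Localization.AtPrime p) X] :
    ExtVanishesAbove (Localization.AtPrime p) X (Localization.AtPrime p) d := by
  let T := Localization.AtPrime m
  have hTflat : ((algebraMap S T).comp ρ).Flat :=
    hρ.comp (RingHom.flat_algebraMap_iff.2 (IsLocalization.flat T m.primeCompl))
  have hT := hJ.quotient_map hTflat
  rw [← Ideal.map_map, ← hm, Localization.AtPrime.map_eq_maximalIdeal] at hT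
  have := Localization.isLocalHom_localRingHom p m ι hp
  exact fun i hi => ExtVanishes.of_flat_localHom (RingHom.Flat.localRingHom hι m p hp)
    (fun Y _ _ _ => extVanishesAbove_of_residue hT i hi) X

end FlatExtension

lemma isNoetherianRing_tensorProduct_left (k A B : Type*) [CommRing k] [CommRing A] [Algebra k A]
    [CommRing B] [Algebra k B] [Algebra.EssFiniteType k A] [IsNoetherianRing B] :
    IsNoetherianRing (A ⊗[k] B) :=
  have : IsNoetherianRing (B ⊗[k] A) := Algebra.EssFiniteType.isNoetherianRing B _
  isNoetherianRing_of_ringEquiv _ (Algebra.TensorProduct.comm k B A).toRingEquiv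

lemma hasInjectiveDimensionLE_iff_forall_atPrime {R : Type u} [CommRing R] [IsNoetherianRing R]
    (d : ℕ) : HasInjectiveDimensionLE (ModuleCat.of R R) d ↔ ∀ (m : Ideal R) [m.IsMaximal],
      HasInjectiveDimensionLE
        (ModuleCat.of (Localization.AtPrime m) (Localization.AtPrime m)) d := by
  have e (m : Ideal R) [m.IsMaximal] : Localization.AtPrime m ≃ₗ[Localization.AtPrime m]
      (ModuleCat.of R R).localizedModule m.primeCompl :=
    have := ModuleCat.localizedModule_isLocalizedModule (ModuleCat.of R R) m.primeCompl
    (IsLocalizedModule.linearEquiv m.primeCompl (Algebra.linearMap R (Localization.AtPrime m))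
      ((ModuleCat.of R R).localizedModuleMkLinearMap
        m.primeCompl)).extendScalarsOfIsLocalization m.primeCompl _
  rw [ModuleCat.hasInjectiveDimensionLE_iff_forall_maximalSpectrum]
  exact ⟨fun h m hm => (ModuleCat.hasInjectiveDimensionLE_iff_of_linearEquiv (e m) d).2 (h ⟨m, hm⟩),
    fun h m => (ModuleCat.hasInjectiveDimensionLE_iff_of_linearEquiv (e m.1) d).1 (h m.1)⟩

section LocalInjectiveDimension

variable {k : Type u'} [Field k] {H : Type u} [CommRing H] [HopfAlgebra k H] [IsNoetherianRing H]

lemma extVanishesAbove_atPrime_of_augmentationIdeal {d : ℕ}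
    (h : ExtVanishesAbove H (H ⧸ augmentationIdeal k H) H d) (m : Ideal H) [m.IsMaximal]
    (X : Type u) [AddCommGroup X] [Module (Localization.AtPrime m) X]
    [Module.Finite (Localization.AtPrime m) X] :
    ExtVanishesAbove (Localization.AtPrime m) X (Localization.AtPrime m) d := by
  let _ := Ideal.Quotient.field m
  let π := Ideal.Quotient.mkₐ k m
  have hgen : IntermediateField.adjoin k (Set.range π) = ⊤ := by
    rw [(Ideal.Quotient.mkₐ_surjective k m).range_eq, IntermediateField.adjoin_univ]
  have := essFiniteType_of_adjoin_range_eq_top (fg_kaehlerIdeal k H) π hgen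
  have := isNoetherianRing_tensorProduct_left k (H ⧸ m) H
  have := RingHom.ker_isMaximal_of_surjective _ (evalPoint_surjective (.toConv π))
  refine extVanishesAbove_atPrime_of_flat_pair (flat_twistedCoaction π)
    (flat_includeRight k (H ⧸ m) H) h (RingHom.ker (evalPoint (.toConv π))) (ker_evalPoint π) m ?_ X
  ext x
  simp [π, RingHom.mem_ker, Ideal.Quotient.eq_zero_iff_mem]

theorem hasInjectiveDimensionLE_of_augmentationIdeal {d : ℕ}
    (h : ExtVanishesAbove H (H ⧸ augmentationIdeal k H) H d) :
    HasInjectiveDimensionLE (ModuleCat.of H H) d :=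
  (hasInjectiveDimensionLE_iff_forall_atPrime d).2 fun m _ =>
    hasInjectiveDimensionLE_of_extVanishes fun _ =>
      extVanishesAbove_atPrime_of_augmentationIdeal h m _ (d + 1) d.lt_succ_self

end LocalInjectiveDimension

/-! ### Points of affine space -/

section KernelOfPoint

variable {A : Type u} [CommRing A]

lemma ExtVanishesAbove.quotient_sup_span_singleton {N : Type u} [AddCommGroup N] [Module A N]
    {J : Ideal A} {y : A} (hy : IsSMulRegular (A ⧸ J) y) {d : ℕ}
    (h : ExtVanishesAbove A (A ⧸ J) N d) :
    ExtVanishesAbove A (A ⧸ J ⊔ Ideal.span {y}) N (d + 1) := by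
  have hsurj : Function.Surjective (Submodule.factor (le_sup_left : J ≤ J ⊔ Ideal.span {y})) :=
    Submodule.factor_surjective _
  have hexact : Function.Exact (LinearMap.lsmul A (A ⧸ J) y)
      (Submodule.factor (le_sup_left : J ≤ J ⊔ Ideal.span {y})) := by
    intro x
    obtain ⟨x, rfl⟩ := Ideal.Quotient.mk_surjective x
    have hker : Submodule.factor (le_sup_left : J ≤ J ⊔ Ideal.span {y}) (Ideal.Quotient.mk J x) = 0
        ↔ x ∈ J ⊔ Ideal.span {y} := Ideal.Quotient.eq_zero_iff_mem
    have hsmul (c : A) : LinearMap.lsmul A (A ⧸ J) y (Ideal.Quotient.mk J c) =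
        Ideal.Quotient.mk J (c * y) := congrArg _ (mul_comm y c)
    rw [hker, sup_comm, Ideal.mem_span_singleton_sup]
    simp only [Set.mem_range, Ideal.Quotient.mk_surjective.exists, hsmul, Ideal.Quotient.eq]
    constructor
    · rintro ⟨c, z, hz, rfl⟩
      exact ⟨c, by simpa using hz⟩
    · rintro ⟨c, hc⟩
      exact ⟨c, x - c * y, by simpa using J.neg_mem hc, by ring⟩
  rintro (_ | i) hi
  · omega
  · exact ExtVanishes.of_exact₃ (a := LinearMap.lsmul A _ y) hy hsurj hexact (h i (by omega))
      (h (i + 1) (by omega))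

lemma comap_evalRingHom (I : Ideal A) (a : A) :
    I.comap (Polynomial.evalRingHom a) =
      I.map Polynomial.C ⊔ Ideal.span {Polynomial.X - Polynomial.C a} := by
  have hI : I = (I.map Polynomial.C).map (Polynomial.evalRingHom a) := by
    rw [Ideal.map_map, Polynomial.evalRingHom, Polynomial.eval₂RingHom]
    convert (Ideal.map_id I).symm
    ext; simp
  conv_lhs => rw [hI]
  rw [Ideal.comap_map_of_surjective' _ (Polynomial.eval_surjective a), Polynomial.ker_evalRingHom]

lemma isSMulRegular_X_sub_C (I : Ideal A) (a : A) :
    IsSMulRegular (Polynomial A ⧸ I.map Polynomial.C) (Polynomial.X - Polynomial.C a) := by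
  refine isSMulRegular_iff_right_eq_zero_of_smul.2 fun x hx => ?_
  obtain ⟨p, rfl⟩ := Ideal.Quotient.mk_surjective x
  change Ideal.Quotient.mk _ ((Polynomial.X - Polynomial.C a) * p) = 0 at hx
  rw [Ideal.Quotient.eq_zero_iff_mem, ← Ideal.mk_ker (I := I), ← Polynomial.ker_mapRingHom,
    RingHom.mem_ker] at hx ⊢
  refine (Polynomial.monic_X_sub_C (Ideal.Quotient.mk I a)).isRegular.left ?_
  simpa using hx

lemma ExtVanishesAbove.comap_evalRingHom [IsNoetherianRing A] {I : Ideal A} {d : ℕ}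
    (h : ExtVanishesAbove A (A ⧸ I) A d) (a : A) :
    ExtVanishesAbove (Polynomial A) (Polynomial A ⧸ I.comap (Polynomial.evalRingHom a))
      (Polynomial A) (d + 1) := by
  have hC : (Polynomial.C : A →+* Polynomial A).Flat := by
    rw [← Polynomial.algebraMap_eq, RingHom.flat_algebraMap_iff]
    infer_instance
  rw [_root_.comap_evalRingHom]
  exact (h.quotient_map hC).quotient_sup_span_singleton (isSMulRegular_X_sub_C I a)

lemma extVanishesAbove_quotient_ker_eval (B : Type u) [CommRing B] [IsNoetherianRing B] (n : ℕ)
    (b : Fin n → B) :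
    ExtVanishesAbove (MvPolynomial (Fin n) B)
      (MvPolynomial (Fin n) B ⧸ RingHom.ker (MvPolynomial.eval b)) (MvPolynomial (Fin n) B) n := by
  induction n with
  | zero =>
    have hker : RingHom.ker (MvPolynomial.eval b) = ⊥ := by
      refine (RingHom.injective_iff_ker_eq_bot _).1 fun p q hpq => ?_
      obtain ⟨⟨r, rfl⟩, ⟨s, rfl⟩⟩ := And.intro (MvPolynomial.C_surjective _ p)
        (MvPolynomial.C_surjective _ q)
      simpa using hpq
    have := Module.Projective.of_equiv (Submodule.quotEquivOfEqBot _ hker).symm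
    exact extVanishesAbove_of_projective 0
  | succ n ih =>
    let e := (MvPolynomial.finSuccEquiv B n).symm.toRingEquiv
    have hker : RingHom.ker (MvPolynomial.eval b) = ((RingHom.ker (MvPolynomial.eval
        (Fin.tail b))).comap (Polynomial.evalRingHom (MvPolynomial.C (b 0)))).map e.toRingHom := by
      refine Eq.trans ?_ (Ideal.map_comap_of_equiv e).symm
      ext p
      rw [Ideal.mem_comap, Ideal.mem_comap, RingHom.mem_ker, RingHom.mem_ker]
      have h := MvPolynomial.eval_polynomial_eval_finSuccEquiv (x := Fin.tail b) p
        (MvPolynomial.C (b 0))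
      rw [MvPolynomial.eval_C] at h
      have hb := congrArg (fun c => MvPolynomial.eval c p) (Fin.cons_self_tail b)
      exact (h.trans hb).symm ▸ Iff.rfl
    rw [hker]
    exact ((ih (Fin.tail b)).comap_evalRingHom (MvPolynomial.C (b 0))).quotient_map
      (.of_bijective e.bijective)

end KernelOfPoint

lemma ExtVanishesAbove.quotient_ker_of_isLocalization {A A' : Type u} {D : Type*} [CommRing A]
    [IsNoetherianRing A] [CommRing A'] [Algebra A A'] [Semiring D] (M : Submonoid A)
    [IsLocalization M A'] (φ : A' →+* D) {d : ℕ}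
    (h : ExtVanishesAbove A (A ⧸ RingHom.ker (φ.comp (algebraMap A A'))) A d) :
    ExtVanishesAbove A' (A' ⧸ RingHom.ker φ) A' d := by
  have := h.quotient_map (RingHom.flat_algebraMap_iff.2 (IsLocalization.flat A' M))
  rwa [← RingHom.comap_ker, IsLocalization.map_under M A'] at this

section

attribute [local instance] MvPolynomial.algebraMvPolynomial Algebra.TensorProduct.rightAlgebra

lemma isLocalization_mvPolynomial_tensorProduct (k σ L B : Type*) [CommRing k] [CommRing L]
    [Algebra k L] [Algebra (MvPolynomial σ k) L] [IsScalarTower k (MvPolynomial σ k) L]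
    (M : Submonoid (MvPolynomial σ k)) [IsLocalization M L] [CommRing B] [Algebra k B] :
    let _ : Algebra (MvPolynomial σ B) (L ⊗[k] B) := (MvPolynomial.eval₂Hom
      (Algebra.TensorProduct.includeRight (R := k) (A := L) (B := B)).toRingHom
      fun i => algebraMap (MvPolynomial σ k) L (MvPolynomial.X i) ⊗ₜ 1).toAlgebra
    IsLocalization (Algebra.algebraMapSubmonoid (MvPolynomial σ B) M) (L ⊗[k] B) := by
  intro _
  have : IsScalarTower B (MvPolynomial σ B) (L ⊗[k] B) := .of_algebraMap_eq' <| by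
    ext b
    exact (MvPolynomial.eval₂Hom_C _ _ b).symm
  have : IsScalarTower (MvPolynomial σ k) (MvPolynomial σ B) (L ⊗[k] B) := .of_algebraMap_eq' <| by
    refine MvPolynomial.ringHom_ext (fun c => ?_) fun i => ?_
    · have hc : algebraMap (MvPolynomial σ k) L (MvPolynomial.C c) = algebraMap k L c :=
        (IsScalarTower.algebraMap_apply k _ L c).symm
      simp [RingHom.algebraMap_toAlgebra, hc, Algebra.TensorProduct.tmul_one_eq_one_tmul]
    · simp [RingHom.algebraMap_toAlgebra]
  have : IsScalarTower k (MvPolynomial σ B) (L ⊗[k] B) := .to₁₃₄ k B _ _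
  rw [Algebra.isLocalization_iff_isPushout _ L, Algebra.IsPushout.comm,
    ← Algebra.IsPushout.comp_iff k _ B]
  infer_instance

end

lemma extVanishesAbove_quotient_ker_productLeft {k : Type*} [CommRing k] {n : ℕ}
    (M : Submonoid (MvPolynomial (Fin n) k)) (L B : Type u) [CommRing L] [Algebra k L]
    [Algebra (MvPolynomial (Fin n) k) L] [IsScalarTower k (MvPolynomial (Fin n) k) L]
    [IsLocalization M L] [CommRing B] [IsNoetherianRing B] [Algebra k B] [Algebra L B]
    [IsScalarTower k L B] :
    ExtVanishesAbove (L ⊗[k] B)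
      ((L ⊗[k] B) ⧸ RingHom.ker
        (Algebra.TensorProduct.productLeftAlgHom (Algebra.ofId L B) (AlgHom.id k B)))
      (L ⊗[k] B) n := by
  let _ : Algebra (MvPolynomial (Fin n) B) (L ⊗[k] B) := (MvPolynomial.eval₂Hom
    (Algebra.TensorProduct.includeRight (R := k) (A := L) (B := B)).toRingHom
    fun i => algebraMap (MvPolynomial (Fin n) k) L (MvPolynomial.X i) ⊗ₜ 1).toAlgebra
  let _ := MvPolynomial.algebraMvPolynomial (σ := Fin n) (R := k) (S := B)
  have := isLocalization_mvPolynomial_tensorProduct k (Fin n) L B M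
  refine .quotient_ker_of_isLocalization
    (Algebra.algebraMapSubmonoid (MvPolynomial (Fin n) B) M)
    (Algebra.TensorProduct.productLeftAlgHom (Algebra.ofId L B) (AlgHom.id k B)).toRingHom ?_
  let x : Fin n → B := fun i =>
    algebraMap L B (algebraMap (MvPolynomial (Fin n) k) L (MvPolynomial.X i))
  have hx : (Algebra.TensorProduct.productLeftAlgHom (Algebra.ofId L B)
      (AlgHom.id k B)).toRingHom.comp (algebraMap (MvPolynomial (Fin n) B) (L ⊗[k] B)) =
      MvPolynomial.eval x := by
    refine MvPolynomial.ringHom_ext (fun b => ?_) fun i => ?_ <;>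
      simp [RingHom.algebraMap_toAlgebra, x]
  rw [hx]
  exact extVanishesAbove_quotient_ker_eval B n x

section Localization

variable {S S' X : Type u} [CommRing S] [CommRing S'] [Algebra S S'] [AddCommGroup X] [Module S X]
  [Module S' X] [IsScalarTower S S' X] (U : Submonoid S) [IsLocalization U S']

include S' in
lemma ext_eq_zero_of_smul_eq_zero {N : Type u} [AddCommGroup N] [Module S N] {i : ℕ} {s : S}
    (hs : s ∈ U) {e : Abelian.Ext.{u} (ModuleCat.of S X) (ModuleCat.of S N) i} (he : s • e = 0) :
    e = 0 := by
  have hbij : Function.Bijective (s • LinearMap.id : X →ₗ[S] X) := by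
    have := isLocalizedModule_id U S' (M := X)
    exact (Module.End.isUnit_iff _).1 (IsLocalizedModule.map_units (S := U) .id ⟨s, hs⟩)
  let f := LinearEquiv.ofBijective _ hbij
  let g : ModuleCat.of S X ⟶ ModuleCat.of S X := ModuleCat.ofHom f.symm.toLinearMap
  have hg : s • g = 𝟙 _ := by
    ext x
    exact f.apply_symm_apply x
  rw [← Abelian.Ext.mk₀_id_comp e, ← hg, Abelian.Ext.mk₀_smul, Abelian.Ext.smul_comp,
    ← Abelian.Ext.comp_smul, he, Abelian.Ext.comp_zero]

include U in
lemma ExtVanishes.of_isLocalization [IsNoetherianRing S] [Module.Finite S X] {i : ℕ}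
    (h : ExtVanishes S' X S' i) : ExtVanishes S X S i := by
  have := IsLocalization.flat S' U
  have := isLocalizedModule_id U S' (M := X)
  have hX := (IsLocalizedModule.isBaseChange U S' (.id : X →ₗ[S] X)).equiv
  have hsub := (extVanishes_baseChange_iff S').1 ((h.congr_left hX.symm).congr_right
    (TensorProduct.AlgebraTensorModule.rid S S' S').symm)
  refine subsingleton_of_forall_eq 0 fun e => ?_
  obtain ⟨s, hs, he⟩ :=
    (IsLocalizedModule.subsingleton_iff U (TensorProduct.mk S S' _ 1)).1 hsub e
  exact ext_eq_zero_of_smul_eq_zero (S' := S') U hs he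

end Localization

attribute [local instance] Algebra.TensorProduct.rightAlgebra in
lemma extVanishesAbove_tensorProduct_of_isLocalization {k : Type*} [CommRing k] {n : ℕ}
    (M : Submonoid (MvPolynomial (Fin n) k)) (L C H : Type u) [CommRing L] [Algebra k L]
    [Algebra (MvPolynomial (Fin n) k) L] [IsScalarTower k (MvPolynomial (Fin n) k) L]
    [IsLocalization M L] [CommRing C] [IsNoetherianRing C] [Algebra k C] [Algebra L C]
    [IsScalarTower k L C] [CommRing H] [Algebra k H] [Algebra H C] [IsScalarTower k H C]
    (U : Submonoid H) [IsLocalization U C] [IsNoetherianRing (L ⊗[k] H)] [Algebra (L ⊗[k] H) C]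
    [IsScalarTower L (L ⊗[k] H) C] [IsScalarTower H (L ⊗[k] H) C] [Module.Finite (L ⊗[k] H) C] :
    ExtVanishesAbove (L ⊗[k] H) C (L ⊗[k] H) n := by
  let _ : Algebra (L ⊗[k] H) (L ⊗[k] C) :=
    (Algebra.TensorProduct.map (AlgHom.id L L) (IsScalarTower.toAlgHom k H C)).toAlgebra
  let φ := Algebra.TensorProduct.productLeftAlgHom (Algebra.ofId L C) (AlgHom.id k C)
  let _ : Algebra (L ⊗[k] C) C := φ.toAlgebra
  have : IsScalarTower L (L ⊗[k] H) (L ⊗[k] C) :=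
    .of_algebraMap_eq fun l => by simp [RingHom.algebraMap_toAlgebra]
  have : IsScalarTower (L ⊗[k] H) (L ⊗[k] C) C := .of_algebraMap_eq fun s => by
    induction s using TensorProduct.induction_on with
    | zero => simp only [map_zero]
    | add s t hs ht => simp only [map_add, hs, ht]
    | tmul l h =>
      have hlh : l ⊗ₜ[k] h = algebraMap L (L ⊗[k] H) l * algebraMap H (L ⊗[k] H) h := by
        simp [RingHom.algebraMap_toAlgebra]
      rw [hlh, map_mul, ← IsScalarTower.algebraMap_apply, ← IsScalarTower.algebraMap_apply]
      simp [RingHom.algebraMap_toAlgebra, φ, Algebra.ofId_apply]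
  have := IsLocalization.tensorProduct_tensorProduct_right k L U C
    (by ext; simp [RingHom.algebraMap_toAlgebra])
  have hφ : Function.Surjective (Algebra.ofId (L ⊗[k] C) C) :=
    fun c => ⟨1 ⊗ₜ c, by simp [Algebra.ofId_apply, RingHom.algebraMap_toAlgebra, φ]⟩
  exact fun i hi => .of_isLocalization
    (U.map (Algebra.TensorProduct.includeRight (R := k) (A := L)))
    ((extVanishesAbove_quotient_ker_productLeft M L C i hi).congr_left
      (Ideal.quotientKerAlgEquivOfSurjective hφ).toLinearEquiv)

/-! ### Duality along a finite extension -/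

lemma exists_free_surjective (R X : Type u) [CommRing R] [AddCommGroup X] [Module R X] :
    ∃ (P : Type u) (_ : AddCommGroup P) (_ : Module R P) (_ : Module.Free R P) (b : P →ₗ[R] X),
      Function.Surjective b :=
  ⟨X →₀ R, inferInstance, inferInstance, inferInstance, Finsupp.linearCombination R id,
    Finsupp.linearCombination_id_surjective R X⟩

section Retraction

variable {H S R X Y P : Type u} [CommRing H] [CommRing S] [CommRing R] [Algebra H R] [Algebra S R]
  [SMulCommClass H S R] [AddCommGroup X] [Module H X] [AddCommGroup Y] [Module H Y]
  [AddCommGroup P] [Module H P]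
  {r : (R →ₗ[S] S) →+ H} {θ : R →ₗ[S] S}

lemma surjective_lcomp_of_surjective_lcomp_baseChange
    (hr : ∀ h φ, r (φ ∘ₗ LinearMap.mulLeft S (algebraMap H R h)) = h * r φ) (hθ : r θ = 1)
    {a : Y →ₗ[H] P}
    (h : Function.Surjective (LinearMap.lcomp S S ((a.baseChange R).restrictScalars S))) :
    Function.Surjective (LinearMap.lcomp H H a) := by
  intro f
  obtain ⟨G, hG⟩ := h (θ ∘ₗ
    ((TensorProduct.AlgebraTensorModule.rid H R R).toLinearMap ∘ₗ f.baseChange R).restrictScalars S)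
  let φ (x : P) : R →ₗ[S] S :=
    G ∘ₗ ((TensorProduct.AlgebraTensorModule.mk H R R P).flip x).restrictScalars S
  have hφ_add (x y : P) : φ (x + y) = φ x + φ y := by
    ext z
    simp [φ]
  have hφ_smul (c : H) (x : P) : φ (c • x) = φ x ∘ₗ LinearMap.mulLeft S (algebraMap H R c) := by
    ext z
    simp [φ, TensorProduct.smul_tmul', Algebra.smul_def]
  have hφ_comp (y : Y) : φ (a y) = θ ∘ₗ LinearMap.mulLeft S (algebraMap H R (f y)) := by
    ext z
    simpa [φ, Algebra.smul_def] using LinearMap.congr_fun hG (z ⊗ₜ y)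
  refine ⟨{ toFun := fun x => r (φ x)
            map_add' := fun x y => by rw [hφ_add, map_add]
            map_smul' := fun c x => by rw [hφ_smul, hr, RingHom.id_apply, smul_eq_mul] }, ?_⟩
  ext y
  change r (φ (a y)) = f y
  rw [hφ_comp, hr, hθ, mul_one]

section Shift

variable [Module.Flat H R] [Module.Free S R] [Module.Free H P] {a : Y →ₗ[H] P} {b : P →ₗ[H] X}
  (ha : Function.Injective a) (hb : Function.Surjective b) (hab : Function.Exact a b)

include ha hb hab

lemma extVanishes_tensor_one_iff : ExtVanishes S (R ⊗[H] X) S 1 ↔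
    Function.Surjective (LinearMap.lcomp S S ((a.baseChange R).restrictScalars S)) :=
  have : Module.Free S (R ⊗[H] P) := .trans (S := R)
  extVanishes_one_iff (b := (b.baseChange R).restrictScalars S)
    (Module.Flat.lTensor_preserves_injective_linearMap _ ha) (LinearMap.lTensor_surjective R hb)
    (lTensor_exact R hab hb)

lemma extVanishes_tensor_succ_iff {i : ℕ} :
    ExtVanishes S (R ⊗[H] X) S (i + 2) ↔ ExtVanishes S (R ⊗[H] Y) S (i + 1) :=
  have : Module.Free S (R ⊗[H] P) := .trans (S := R)
  extVanishes_succ_iff (a := (a.baseChange R).restrictScalars S)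
    (b := (b.baseChange R).restrictScalars S)
    (Module.Flat.lTensor_preserves_injective_linearMap _ ha) (LinearMap.lTensor_surjective R hb)
    (lTensor_exact R hab hb)

end Shift

/-- Since `Hom_S(R ⊗_H -, S) = Hom_H(-, Hom_S(R, S))`, it is enough that `H` is a direct summand of
the `H`-module `Hom_S(R, S)`, with retraction `r` and section `h ↦ h • θ`. -/
theorem ExtVanishes.of_retraction [Module.Flat H R] [Module.Free S R]
    (hr : ∀ h φ, r (φ ∘ₗ LinearMap.mulLeft S (algebraMap H R h)) = h * r φ) (hθ : r θ = 1) {i : ℕ}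
    (h : ExtVanishes S (R ⊗[H] X) S (i + 1)) : ExtVanishes H X H (i + 1) := by
  induction i generalizing X with
  | zero =>
    obtain ⟨P, _, _, _, b, hb⟩ := exists_free_surjective H X
    have hab := b.exact_subtype_ker_map
    exact (extVanishes_one_iff b.ker.injective_subtype hb hab).2
      (surjective_lcomp_of_surjective_lcomp_baseChange hr hθ
        ((extVanishes_tensor_one_iff b.ker.injective_subtype hb hab).1 h))
  | succ i ih =>
    obtain ⟨P, _, _, _, b, hb⟩ := exists_free_surjective H X
    have hab := b.exact_subtype_ker_map
    exact (extVanishes_succ_iff b.ker.injective_subtype hb hab).2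
      (ih ((extVanishes_tensor_succ_iff b.ker.injective_subtype hb hab).1 h))

end Retraction

section Duality

section Contraction

variable {k H C : Type*} [CommRing k] [CommRing H] [Algebra k H] [CommRing C] [Algebra k C]

variable (H) in
/-- Contraction of the left tensor factor by a functional, `c ⊗ h ↦ v(c) h`. -/
noncomputable def dualContraction (v : Module.Dual k C) : C ⊗[k] H →ₗ[k] H :=
  (TensorProduct.lid k H).toLinearMap ∘ₗ v.rTensor H

@[simp] lemma dualContraction_tmul (v : Module.Dual k C) (c : C) (h : H) :
    dualContraction H v (c ⊗ₜ h) = v c • h := by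
  simp [dualContraction]

lemma dualContraction_one_tmul_mul (v : Module.Dual k C) (h : H) (z : C ⊗[k] H) :
    dualContraction H v ((1 ⊗ₜ h) * z) = h * dualContraction H v z := by
  induction z using TensorProduct.induction_on with
  | zero => simp
  | add y z hy hz => simp only [mul_add, map_add, hy, hz]
  | tmul c g => simp

end Contraction

variable {k H C L ι : Type*} [CommRing k] [CommRing H] [CommRing C] [Algebra k C] [CommRing L]
  [Algebra k L] [Algebra L C] [IsScalarTower k L C]

variable (k H C L) in
/-- The `L ⊗ H`-algebra structure of `C ⊗ H` for an `L`-algebra `C`. -/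
noncomputable abbrev tensorProductAlgebraLeft [Algebra k H] : Algebra (L ⊗[k] H) (C ⊗[k] H) :=
  (Algebra.TensorProduct.map (IsScalarTower.toAlgHom k L C) (AlgHom.id k H)).toAlgebra

attribute [local instance] tensorProductAlgebraLeft

section Algebra

variable [Algebra k H]

lemma algebraMap_tmul (l : L) (h : H) :
    algebraMap (L ⊗[k] H) (C ⊗[k] H) (l ⊗ₜ h) = algebraMap L C l ⊗ₜ h := by
  simp [RingHom.algebraMap_toAlgebra]

lemma tmul_smul_tmul (l : L) (h g : H) (c : C) :
    (l ⊗ₜ[k] h) • (c ⊗ₜ[k] g) = (l • c) ⊗ₜ[k] (h * g) := by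
  simp [Algebra.smul_def, algebraMap_tmul]

attribute [local instance] Algebra.TensorProduct.rightAlgebra in
lemma free_tensorProduct_tensorProduct [Module.Free L C] :
    Module.Free (L ⊗[k] H) (C ⊗[k] H) := by
  have : IsScalarTower L (L ⊗[k] H) (C ⊗[k] H) := .of_algebraMap_eq fun l => by
    simp [RingHom.algebraMap_toAlgebra]
  have : IsScalarTower H (L ⊗[k] H) (C ⊗[k] H) := .of_algebraMap_eq fun h => by
    simp [RingHom.algebraMap_toAlgebra]
  have : IsScalarTower k (L ⊗[k] H) (C ⊗[k] H) := .to₁₃₄ k L _ _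
  have h : Algebra.IsPushout L C (L ⊗[k] H) (C ⊗[k] H) := by
    exact (Algebra.IsPushout.comp_iff k L H (L ⊗[k] H)).1 inferInstance
  exact h.symm.out.free

/-- The extension of an `L`-linear functional on `C` to `C ⊗ H`. -/
noncomputable def functionalRTensor (μ : Module.Dual L C) :
    C ⊗[k] H →ₗ[L ⊗[k] H] L ⊗[k] H where
  toFun := (μ.restrictScalars k).rTensor H
  map_add' := map_add _
  map_smul' s x := by
    induction s using TensorProduct.induction_on with
    | zero => simp
    | add s t hs ht => simp only [add_smul, map_add, hs, ht]
    | tmul l g =>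
      induction x using TensorProduct.induction_on with
      | zero => simp
      | add s t hs ht => simp only [smul_add, map_add, hs, ht]
      | tmul c h => simp [tmul_smul_tmul]

lemma functionalRTensor_tmul (μ : Module.Dual L C) (c : C) (h : H) :
    functionalRTensor μ (c ⊗ₜ[k] h) = μ c ⊗ₜ h := rfl

variable [Fintype ι] (b : Module.Basis ι L C) (ν : Module.Dual k L)

lemma sum_coord_mul_mul_coord (x c : C) (i : ι) :
    ∑ j, b.coord i (x * b j) * b.coord j c = b.coord i (x * c) := by
  conv_rhs => rw [← b.sum_repr c, Finset.mul_sum, map_sum]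
  refine Finset.sum_congr rfl fun j _ => ?_
  rw [mul_smul_comm, map_smul, smul_eq_mul, mul_comm, b.coord_apply j]

/-- The `k`-linear functional on `C` induced by `ν` from the `i`-th coordinate. -/
noncomputable def coordDual (i : ι) : Module.Dual k C := ν ∘ₗ (b.coord i).restrictScalars k

lemma sum_dualContraction_coord_mul (x : C) (i : ι) (z : C ⊗[k] H) :
    ∑ j, dualContraction H (coordDual b ν j) ((algebraMap L C (b.coord i (x * b j)) ⊗ₜ 1) * z) =
      dualContraction H (coordDual b ν i) ((x ⊗ₜ 1) * z) := by
  induction z using TensorProduct.induction_on with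
  | zero => simp
  | add y z hy hz => simp only [mul_add, map_add, Finset.sum_add_distrib, hy, hz]
  | tmul c h =>
    simp only [Algebra.TensorProduct.tmul_mul_tmul, one_mul, dualContraction_tmul, coordDual,
      ← Algebra.smul_def, LinearMap.comp_apply, LinearMap.restrictScalars_apply, map_smul,
      smul_eq_mul, ← Finset.sum_smul, ← map_sum, sum_coord_mul_mul_coord]

lemma tmul_mul_basis (x : C) (g : H) (j : ι) : (x ⊗ₜ[k] g) * (b j ⊗ₜ 1) =
    ∑ i, (b.coord i (x * b j) ⊗ₜ[k] g : L ⊗[k] H) • (b i ⊗ₜ[k] (1 : H) : C ⊗[k] H) := by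
  simp only [tmul_smul_tmul, mul_one, Algebra.TensorProduct.tmul_mul_tmul,
    ← TensorProduct.sum_tmul, b.coord_apply, b.sum_repr]

end Algebra

variable [Fintype ι] (b : Module.Basis ι L C) (ν : Module.Dual k L) [HopfAlgebra k H]
  (π : H →ₐ[k] C)

/-- In terms of the identification of `Hom_{L ⊗ H}(C ⊗ H, L ⊗ H)` with `Hom_L(C, L) ⊗ H` given by
the basis `b`, this is `v ⊗ h ↦ ∑ ν(v(π(h₂))) h₁`. -/
noncomputable def dualRetraction : (C ⊗[k] H →ₗ[L ⊗[k] H] L ⊗[k] H) →+ H where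
  toFun φ := ∑ i, dualContraction H (coordDual b ν i)
    (translationEquiv π (algebraMap (L ⊗[k] H) (C ⊗[k] H) (φ (b i ⊗ₜ 1))))
  map_zero' := by simp
  map_add' φ ψ := by simp [Finset.sum_add_distrib]

lemma dualRetraction_apply (φ : C ⊗[k] H →ₗ[L ⊗[k] H] L ⊗[k] H) :
    dualRetraction b ν π φ = ∑ i, dualContraction H (coordDual b ν i)
      (translationEquiv π (algebraMap (L ⊗[k] H) (C ⊗[k] H) (φ (b i ⊗ₜ 1)))) := rfl

lemma translationEquiv_tmul (c : C) (h : H) :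
    translationEquiv π (c ⊗ₜ h) = (c ⊗ₜ 1) * translationEquiv π (1 ⊗ₜ h) := by
  have hc : translationEquiv π (c ⊗ₜ 1) = c ⊗ₜ 1 := (translationEquiv π).commutes c
  rw [← hc, ← map_mul, Algebra.TensorProduct.tmul_mul_tmul, mul_one, one_mul]

lemma dualRetraction_comp_mulLeft (φ : C ⊗[k] H →ₗ[L ⊗[k] H] L ⊗[k] H) (z : C ⊗[k] H) :
    dualRetraction b ν π (φ ∘ₗ LinearMap.mulLeft (L ⊗[k] H) z) =
      ∑ i, dualContraction H (coordDual b ν i) (translationEquiv π z *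
        translationEquiv π (algebraMap (L ⊗[k] H) (C ⊗[k] H) (φ (b i ⊗ₜ 1)))) := by
  simp only [dualRetraction_apply, LinearMap.comp_apply, LinearMap.mulLeft_apply]
  induction z using TensorProduct.induction_on with
  | zero => simp
  | add y z hy hz => simp only [map_add, hy, hz, add_mul, Finset.sum_add_distrib]
  | tmul x g =>
    simp only [tmul_mul_basis, map_sum, map_smul, smul_eq_mul, map_mul, algebraMap_tmul]
    rw [Finset.sum_comm]
    simp only [translationEquiv_tmul π x g, fun l => translationEquiv_tmul π (algebraMap L C l) g,
      mul_assoc, sum_dualContraction_coord_mul]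

lemma dualRetraction_comp_mulLeft_twistedCoaction (h : H) (φ : C ⊗[k] H →ₗ[L ⊗[k] H] L ⊗[k] H) :
    dualRetraction b ν π (φ ∘ₗ LinearMap.mulLeft (L ⊗[k] H) (twistedCoaction π h)) =
      h * dualRetraction b ν π φ := by
  simp only [dualRetraction_comp_mulLeft, translationEquiv_twistedCoaction,
    dualContraction_one_tmul_mul, ← Finset.mul_sum]
  rfl

lemma dualRetraction_functionalRTensor (μ : Module.Dual L C) :
    dualRetraction b ν π (functionalRTensor μ) = ν (μ 1) • 1 := by
  have hμ : ∑ i, b.coord i (algebraMap L C (μ (b i))) = μ 1 := by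
    conv_rhs => rw [← b.sum_repr 1, map_sum]
    refine Finset.sum_congr rfl fun i _ => ?_
    rw [Algebra.algebraMap_eq_smul_one, map_smul, map_smul, smul_eq_mul, smul_eq_mul, mul_comm,
      b.coord_apply]
  have hτ (c : C) : translationEquiv π (c ⊗ₜ 1) = c ⊗ₜ 1 := (translationEquiv π).commutes c
  simp only [dualRetraction_apply, functionalRTensor_tmul, algebraMap_tmul, hτ,
    dualContraction_tmul, coordDual, LinearMap.comp_apply, LinearMap.restrictScalars_apply,
    ← Finset.sum_smul, ← map_sum, hμ]

end Duality

section TensorQuotient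

variable {A R C : Type*} [CommRing A] [CommRing R] [CommRing C] [Algebra A R] {I : Ideal A}
  {f : R →+* C} (hsurj : Function.Surjective f) (hker : RingHom.ker f = I.map (algebraMap A R))

/-- A quotient `C` of an `A`-algebra `R` by the extension of an ideal `I` of `A`, identified with
`R ⊗ A ⧸ I`. -/
noncomputable def tensorQuotientEquivOfKerEq : R ⊗[A] (A ⧸ I) ≃+ C :=
  (Algebra.TensorProduct.quotIdealMapEquivTensorQuot R I).symm.toAddEquiv.trans
    ((Ideal.quotEquivOfEq hker.symm).trans
      (RingHom.quotientKerEquivOfSurjective hsurj)).toAddEquiv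

lemma tensorQuotientEquivOfKerEq_smul (s : R) (z : R ⊗[A] (A ⧸ I)) :
    tensorQuotientEquivOfKerEq hsurj hker (s • z) =
      f s * tensorQuotientEquivOfKerEq hsurj hker z := by
  obtain ⟨y, hy⟩ := Ideal.Quotient.mk_surjective
    ((Algebra.TensorProduct.quotIdealMapEquivTensorQuot R I).symm z)
  change RingHom.quotientKerEquivOfSurjective hsurj (Ideal.quotEquivOfEq hker.symm
    ((Algebra.TensorProduct.quotIdealMapEquivTensorQuot R I).symm (s • z))) =
      f s * RingHom.quotientKerEquivOfSurjective hsurj (Ideal.quotEquivOfEq hker.symm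
        ((Algebra.TensorProduct.quotIdealMapEquivTensorQuot R I).symm z))
  rw [map_smul, ← hy]
  exact map_mul f s y

end TensorQuotient

lemma exists_dual_apply_one_eq_one (K A : Type*) [Field K] [Ring A] [Nontrivial A] [Algebra K A] :
    ∃ f : Module.Dual K A, f 1 = 1 := by
  obtain ⟨f, hf⟩ := LinearMap.exists_leftInverse_of_injective (Algebra.linearMap K A)
    (LinearMap.ker_eq_bot.2 (algebraMap K A).injective)
  exact ⟨f, by simpa using LinearMap.congr_fun hf 1⟩

section DirectSummand

variable {k : Type u'} [Field k] {H C L X : Type u} [CommRing H] [HopfAlgebra k H]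
  [CommRing C] [Algebra k C] [Field L] [Algebra k L] [Algebra L C]
  [IsScalarTower k L C] [AddCommGroup X] [Module (L ⊗[k] H) X] (π : H →ₐ[k] C) {e : X ≃+ C}
  (he : ∀ (l : L) (h : H) (x : X), e ((l ⊗ₜ[k] h) • x) = algebraMap L C l * π h * e x)

include he in
attribute [local instance] tensorProductAlgebraLeft in
theorem extVanishes_quotient_augmentationIdeal_of_extVanishes [Nontrivial C] [Module.Finite L C]
    {i : ℕ} (hX : ExtVanishes (L ⊗[k] H) X (L ⊗[k] H) (i + 1)) :
    ExtVanishes H (H ⧸ augmentationIdeal k H) H (i + 1) := by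
  let _ : Algebra H (C ⊗[k] H) := (twistedCoaction π).toRingHom.toAlgebra
  have : SMulCommClass H (L ⊗[k] H) (C ⊗[k] H) := ⟨fun a s z => by
    simp only [Algebra.smul_def, mul_left_comm]⟩
  have : Module.Flat H (C ⊗[k] H) := flat_twistedCoaction π
  have : Module.Free (L ⊗[k] H) (C ⊗[k] H) := free_tensorProduct_tensorProduct
  let ε : (C ⊗[k] H) ⊗[H] (H ⧸ augmentationIdeal k H) ≃+ C := tensorQuotientEquivOfKerEq
    (f := (evalPoint (.toConv π)).toRingHom) (evalPoint_surjective _) (ker_evalPoint π)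
  have he' (s : L ⊗[k] H) (x : X) : e (s • x) =
      evalPoint (.toConv π) (algebraMap (L ⊗[k] H) (C ⊗[k] H) s) * e x := by
    induction s using TensorProduct.induction_on with
    | zero => simp
    | add s t hs ht => simp only [add_smul, map_add, add_mul, hs, ht]
    | tmul l h => simp [he, algebraMap_tmul]
  have hε (r : C ⊗[k] H) (z) : ε (r • z) = evalPoint (.toConv π) r * ε z :=
    tensorQuotientEquivOfKerEq_smul _ _ r z
  let E : X ≃ₗ[L ⊗[k] H] (C ⊗[k] H) ⊗[H] (H ⧸ augmentationIdeal k H) :=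
    (e.trans ε.symm).toLinearEquiv fun s x => ε.injective (by
      rw [← algebraMap_smul (C ⊗[k] H) s ((e.trans ε.symm) x), hε]
      simp [he'])
  obtain ⟨ν, hν⟩ := exists_dual_apply_one_eq_one k L
  obtain ⟨μ, hμ⟩ := exists_dual_apply_one_eq_one L C
  let b := Module.finBasis L C
  exact (hX.congr_left E).of_retraction (r := dualRetraction b ν π) (θ := functionalRTensor μ)
    (dualRetraction_comp_mulLeft_twistedCoaction b ν π)
    (by rw [dualRetraction_functionalRTensor, hμ, hν, one_smul])

end DirectSummand

attribute [local instance] Algebra.TensorProduct.rightAlgebra in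
lemma extVanishesAbove_quotient_augmentationIdeal_of_isLocalization {k : Type u'} [Field k] {n : ℕ}
    (M : Submonoid (MvPolynomial (Fin n) k)) (L : Type u) {C H : Type u} [Field L] [Algebra k L]
    [Algebra (MvPolynomial (Fin n) k) L] [IsScalarTower k (MvPolynomial (Fin n) k) L]
    [IsLocalization M L] [Algebra.EssFiniteType k L] [CommRing C] [Nontrivial C]
    [IsNoetherianRing C] [Algebra k C] [Algebra L C] [IsScalarTower k L C] [Module.Finite L C]
    [CommRing H] [IsNoetherianRing H] [HopfAlgebra k H] [Algebra H C] [IsScalarTower k H C]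
    (U : Submonoid H) [IsLocalization U C] :
    ExtVanishesAbove H (H ⧸ augmentationIdeal k H) H n := by
  have := isNoetherianRing_tensorProduct_left k L H
  let π := IsScalarTower.toAlgHom k H C
  let φ := Algebra.TensorProduct.productLeftAlgHom (Algebra.ofId L C) π
  let _ : Algebra (L ⊗[k] H) C := φ.toAlgebra
  have : IsScalarTower L (L ⊗[k] H) C := .of_algebraMap_eq' φ.comp_algebraMap.symm
  have : IsScalarTower H (L ⊗[k] H) C := .of_algebraMap_eq fun h => by
    simp [RingHom.algebraMap_toAlgebra, φ, π]
  have : Module.Finite (L ⊗[k] H) C := .of_restrictScalars_finite L _ _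
  rintro (_ | i) hi
  · exact absurd hi (Nat.not_lt_zero n)
  · exact extVanishes_quotient_augmentationIdeal_of_extVanishes π (e := .refl C)
      (fun l h x => by
        simp [Algebra.smul_def, RingHom.algebraMap_toAlgebra, φ, π, Algebra.ofId_apply])
      (extVanishesAbove_tensorProduct_of_isLocalization M L C H U (i + 1) hi)

/-! ### Finiteness over a purely transcendental field -/

lemma essFiniteType_residueField_of_isLocalization {k H B : Type*} [Field k] [CommRing H]
    [HopfAlgebra k H] [IsNoetherianRing H] [CommRing B] [IsLocalRing B] [Algebra k B] [Algebra H B]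
    [IsScalarTower k H B] (U : Submonoid H) [IsLocalization U B] :
    Algebra.EssFiniteType k (IsLocalRing.ResidueField B) := by
  refine essFiniteType_of_adjoin_range_eq_top (fg_kaehlerIdeal k H)
    (IsScalarTower.toAlgHom k H (IsLocalRing.ResidueField B)) (top_le_iff.1 fun z _ => ?_)
  obtain ⟨b, rfl⟩ := IsLocalRing.residue_surjective z
  obtain ⟨⟨h, u⟩, hu⟩ := IsLocalization.surj U b
  have hmul : IsLocalRing.residue B b * algebraMap H (IsLocalRing.ResidueField B) u =
      algebraMap H (IsLocalRing.ResidueField B) h :=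
    (map_mul _ _ _).symm.trans (congrArg (IsLocalRing.residue B) hu)
  have hne : algebraMap H (IsLocalRing.ResidueField B) u ≠ 0 :=
    ((IsLocalization.map_units B u).map (IsLocalRing.residue B)).ne_zero
  rw [eq_div_of_mul_eq hne hmul]
  exact div_mem (IntermediateField.subset_adjoin _ _ ⟨h, rfl⟩)
    (IntermediateField.subset_adjoin _ _ ⟨u, rfl⟩)

lemma finite_of_isFiniteLength {A B M : Type*} [CommRing A] [CommRing B] [IsLocalRing B]
    [Algebra A B] [Module.Finite A (IsLocalRing.ResidueField B)] [AddCommGroup M] [Module B M]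
    (hM : IsFiniteLength B M) : ∀ [Module A M] [IsScalarTower A B M], Module.Finite A M := by
  induction hM with
  | of_subsingleton =>
    intro _ _
    infer_instance
  | @of_simple_quotient M _ _ N _ _ ih =>
    intro _ _
    have hN : Module.Finite A (N.restrictScalars A) := ih
    have hquot : Module.Finite A (M ⧸ N.restrictScalars A) := by
      obtain ⟨m, hm, ⟨e⟩⟩ := isSimpleModule_iff_quot_maximal.1 ‹IsSimpleModule B (M ⧸ N)›
      obtain rfl := IsLocalRing.eq_maximalIdeal hm
      have : Module.Finite A (B ⧸ IsLocalRing.maximalIdeal B) :=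
        ‹Module.Finite A (IsLocalRing.ResidueField B)›
      exact Module.Finite.equiv (e.symm.restrictScalars A)
    exact Module.Finite.of_submodule_quotient (N.restrictScalars A)

lemma finite_of_finite_residue_comp {A B : Type*} [CommRing A] [CommRing B] [IsLocalRing B]
    [IsArtinianRing B] {f : A →+* B} (hf : ((IsLocalRing.residue B).comp f).Finite) : f.Finite := by
  let _ := f.toAlgebra
  have : Module.Finite A (IsLocalRing.ResidueField B) := hf
  exact finite_of_isFiniteLength (isFiniteLength_iff_isNoetherian_isArtinian.2
    ⟨inferInstance, (inferInstance : IsArtinianRing B)⟩)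

section CoefficientField

variable {k B ι : Type*} [Field k] [CommRing B] [IsLocalRing B] [IsArtinianRing B] [Algebra k B]

lemma exists_finite_lift_of_isTranscendenceBasis
    [Algebra.EssFiniteType k (IsLocalRing.ResidueField B)] {x : ι → IsLocalRing.ResidueField B}
    (hx : IsTranscendenceBasis k x) :
    ∃ j : IntermediateField.adjoin k (Set.range x) →ₐ[k] B, j.toRingHom.Finite := by
  have := Algebra.FormallySmooth.adjoin_of_algebraicIndependent hx.1
  have hnil : IsNilpotent (RingHom.ker (algebraMap B (IsLocalRing.ResidueField B))) := by
    rw [IsLocalRing.ResidueField.algebraMap_eq, IsLocalRing.ker_residue]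
    exact (isArtinianRing_iff_isNilpotent_maximalIdeal B).1 inferInstance
  let g := IsScalarTower.toAlgHom k B (IsLocalRing.ResidueField B)
  let j := Algebra.FormallySmooth.liftOfSurjective
    (IntermediateField.adjoin k (Set.range x)).val g IsLocalRing.residue_surjective hnil
  have hj : (IsLocalRing.residue B).comp j.toRingHom = algebraMap _ _ := by
    ext y
    exact Algebra.FormallySmooth.liftOfSurjective_apply _ g _ _ y
  have := hx.isAlgebraic_field
  have : Algebra.EssFiniteType (IntermediateField.adjoin k (Set.range x))
    (IsLocalRing.ResidueField B) := .of_comp k _ _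
  have hfin : Module.Finite (IntermediateField.adjoin k (Set.range x))
    (IsLocalRing.ResidueField B) := Algebra.finite_of_essFiniteType_of_isAlgebraic
  exact ⟨j, finite_of_finite_residue_comp (hj ▸ RingHom.finite_algebraMap.2 hfin)⟩

end CoefficientField

open scoped IntermediateField.algebraAdjoinAdjoin in
lemma exists_isLocalization_mvPolynomial_adjoin {k K ι : Type*} [Field k] [Field K] [Algebra k K]
    {x : ι → K} (hx : AlgebraicIndependent k x) :
    ∃ (_ : Algebra (MvPolynomial ι k) (IntermediateField.adjoin k (Set.range x)))
      (M : Submonoid (MvPolynomial ι k)),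
      IsScalarTower k (MvPolynomial ι k) (IntermediateField.adjoin k (Set.range x)) ∧
        IsLocalization M (IntermediateField.adjoin k (Set.range x)) := by
  let e := hx.aevalEquiv.symm
  let f := (IsScalarTower.toAlgHom k (Algebra.adjoin k (Set.range x))
    (IntermediateField.adjoin k (Set.range x))).comp e.symm.toAlgHom
  let _ : Algebra (MvPolynomial ι k) (IntermediateField.adjoin k (Set.range x)) :=
    f.toRingHom.toAlgebra
  exact ⟨_, (nonZeroDivisors _).map e.toRingEquiv, .of_algebraMap_eq' f.comp_algebraMap.symm,
    IsLocalization.isLocalization_of_base_ringEquiv (nonZeroDivisors _) _ e.toRingEquiv⟩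

theorem exists_extVanishesAbove_of_isLocalization {k : Type u'} [Field k] {H B : Type u}
    [CommRing H] [HopfAlgebra k H] [IsNoetherianRing H] [CommRing B] [IsLocalRing B]
    [IsArtinianRing B] [Algebra k B] [Algebra H B] [IsScalarTower k H B] (U : Submonoid H)
    [IsLocalization U B] : ∃ n, ExtVanishesAbove H (H ⧸ augmentationIdeal k H) H n := by
  have := essFiniteType_residueField_of_isLocalization (k := k) (B := B) U
  obtain ⟨n, x, hx⟩ : ∃ (n : ℕ) (x : Fin n → IsLocalRing.ResidueField B),
      IsTranscendenceBasis k x := by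
    obtain ⟨s, hs⟩ := exists_finset_isTranscendenceBasis k (IsLocalRing.ResidueField B)
    exact ⟨s.card, _, (isTranscendenceBasis_equiv s.equivFin.symm).2 hs⟩
  obtain ⟨j, hj⟩ := exists_finite_lift_of_isTranscendenceBasis hx
  obtain ⟨_, M, _, _⟩ := exists_isLocalization_mvPolynomial_adjoin hx.1
  let L := IntermediateField.adjoin k (Set.range x)
  let _ : Algebra L B := j.toRingHom.toAlgebra
  have : IsScalarTower k L B := .of_algebraMap_eq' j.comp_algebraMap.symm
  have : Module.Finite L B := hj
  have : Algebra.EssFiniteType k L := IntermediateField.essFiniteType_iff.2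
    (IntermediateField.fg_adjoin_of_finite (Set.finite_range _))
  exact ⟨n, extVanishesAbove_quotient_augmentationIdeal_of_isLocalization M L (C := B) U⟩

theorem exists_extVanishesAbove_quotient_augmentationIdeal (k : Type u') [Field k] (H : Type u)
    [CommRing H] [HopfAlgebra k H] [IsNoetherianRing H] :
    ∃ n, ExtVanishesAbove H (H ⧸ augmentationIdeal k H) H n := by
  have : Nontrivial H := (Bialgebra.counitAlgHom k H).toRingHom.domain_nontrivial
  obtain ⟨⟨p, hp⟩⟩ := Ideal.nonempty_minimalPrimes (bot_ne_top (α := Ideal H))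
  have := hp.isPrime
  have : IsNoetherianRing (Localization.AtPrime p) :=
    IsLocalization.isNoetherianRing p.primeCompl _ inferInstance
  have : Ring.KrullDimLE 0 (Localization.AtPrime p) := .of_isLocalization _ hp _
  have : IsArtinianRing (Localization.AtPrime p) :=
    isArtinianRing_iff_krullDimLE_zero.2 inferInstance
  exact exists_extVanishesAbove_of_isLocalization (B := Localization.AtPrime p) p.primeCompl

theorem commutative_noetherian_hopf_algebra_gorenstein
    (k : Type u') [Field k] (H : Type u) [CommRing H] [HopfAlgebra k H]
    [IsNoetherianRing H] :
    selfInjectiveDimension H ≠ ⊤ := by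
  obtain ⟨d, hd⟩ := exists_extVanishesAbove_quotient_augmentationIdeal k H
  have hH : HasInjectiveDimensionLE (ModuleCat.of H (ULift.{u} H)) d :=
    (ModuleCat.hasInjectiveDimensionLE_iff_of_linearEquiv ULift.moduleEquiv.symm d).1
      (hasInjectiveDimensionLE_of_augmentationIdeal hd)
  refine ne_top_of_le_ne_top (ENat.natCast_ne_top d) (sInf_le ⟨d, rfl, ?_⟩)
  intro M _ _ i hi
  exact HasInjectiveDimensionLT.subsingleton _ (d + 1) i hi _
end

section
/- Let k be a field and let 𝔤 be a finite-dimensional Lie algebra over k. The universal enveloping algebra U(𝔤) satisfies a polynomial identity if and only if 𝔤 is abelian or k has positive characteristic. -/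
/-!
STATEMENT 10 (Latyšev, Bahturin):
The universal enveloping algebra `U(𝔤)` of a finite-dimensional Lie algebra `𝔤`
over a field `k` satisfies a polynomial identity if and only if `𝔤` is abelian or
`k` has positive characteristic.
-/

universe u v

/-- An algebra `A` over `k` satisfies a polynomial identity if there is a nonzero
polynomial `f` in finitely many noncommuting variables, with coefficients in `k`,
which vanishes identically on `A`. -/
def SatisfiesPolynomialIdentity (k : Type u) (A : Type v) [CommSemiring k] [Ring A]
    [Algebra k A] : Prop :=
  ∃ (n : ℕ) (f : FreeAlgebra k (Fin n)), f ≠ 0 ∧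
    ∀ v : Fin n → A, FreeAlgebra.lift k v f = 0

/-!
Suppose `U(L)` satisfies an identity in characteristic zero. If `A` acts on vectors
`v₀, v₁, …, v_d ≠ 0` so that for each `j < d` some element moves `v_j` to `v_{j+1}` and kills the
other `v_i`, then substituting sums of such elements isolates a shortest monomial of an identity, so
`A` satisfies no identity whose shortest monomials have degree `d`. Such elements arise from any
relation `h y = y h + z y` with `z` commuting with `h` and `y`: the powers of `y` produce vectors of
weights `0, z, 2z, …` for `h`, which are separated by Lagrange interpolation. Two kinds of Lie
algebra provide the relation, in the action of `U(L)` by derivations on a symmetric algebra: one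
with `[x, y] = c y ≠ 0`, where `h = x`, and one of nilpotency class two with `z = [x, y] ≠ 0`, where
`h = y x`. Over an algebraically closed field, excluding the first makes `L` nilpotent by Engel's
theorem, and excluding the second, applied to `L / γ₃(L)`, gives `γ₂(L) = γ₃(L)`; hence `L` is
abelian.

In characteristic `p`, `ad (x ^ p ^ j) = (ad x) ^ p ^ j`, and these maps are linearly dependent on
`L`, so a monic `p`-polynomial in each `x` is central, `U(L)` is a finite module over its centre,
and it satisfies a standard identity because an alternating map in more arguments than generators
vanishes.
-/

open scoped TensorProduct

namespace SatisfiesPolynomialIdentity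

section CommSemiring

variable {k A : Type*} [CommSemiring k] [Ring A] [Algebra k A]

theorem iff_monoidAlgebra :
    SatisfiesPolynomialIdentity k A ↔ ∃ (n : ℕ) (F : MonoidAlgebra k (FreeMonoid (Fin n))),
      F ≠ 0 ∧ ∀ v : Fin n → A, MonoidAlgebra.lift k A _ (FreeMonoid.lift v) F = 0 := by
  have lift_equiv (n : ℕ) (f : FreeAlgebra k (Fin n)) (v : Fin n → A) :
      MonoidAlgebra.lift k A _ (FreeMonoid.lift v) (FreeAlgebra.equivMonoidAlgebraFreeMonoid f) =
        FreeAlgebra.lift k v f := by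
    have : (MonoidAlgebra.lift k A _ (FreeMonoid.lift v)).comp
        FreeAlgebra.equivMonoidAlgebraFreeMonoid.toAlgHom = FreeAlgebra.lift k v := by
      ext i
      simp [FreeAlgebra.equivMonoidAlgebraFreeMonoid]
    exact DFunLike.congr_fun this f
  refine exists_congr fun n =>
    FreeAlgebra.equivMonoidAlgebraFreeMonoid.toEquiv.exists_congr fun f => ?_
  simp [lift_equiv]

theorem of_surjective {B : Type*} [Ring B] [Algebra k B] (h : SatisfiesPolynomialIdentity k A)
    (φ : A →ₐ[k] B) (hφ : Function.Surjective φ) : SatisfiesPolynomialIdentity k B := by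
  obtain ⟨n, f, hf, hv⟩ := h
  refine ⟨n, f, hf, fun w => ?_⟩
  obtain ⟨v, rfl⟩ := hφ.comp_left w
  have : φ.comp (FreeAlgebra.lift k v) = FreeAlgebra.lift k (φ ∘ v) := by ext; simp
  rw [← this, AlgHom.comp_apply, hv, map_zero]

theorem extend_scalars {K : Type*} [CommSemiring K] [Algebra k K] [FaithfulSMul k K]
    [Algebra K A] [IsScalarTower k K A] (h : SatisfiesPolynomialIdentity k A) :
    SatisfiesPolynomialIdentity K A := by
  rw [iff_monoidAlgebra] at h ⊢
  obtain ⟨n, F, hF, hv⟩ := h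
  refine ⟨n, MonoidAlgebra.mapRingHom _ (algebraMap k K) F, fun h0 => hF ?_, fun v => ?_⟩
  · ext w
    simpa using congrArg (fun G => G.coeff w) h0
  · rw [MonoidAlgebra.lift_mapRingHom_algebraMap, hv]

end CommSemiring

section BaseChange

variable {k A : Type*} [CommRing k] [IsDomain k] [Infinite k] [Ring A] [Algebra k A]
  [Module.Free k A]

theorem eq_zero_of_forall_map_aeval_eq_zero {σ : Type*} {t : MvPolynomial σ k ⊗[k] A}
    (h : ∀ c : σ → k,
      Algebra.TensorProduct.map (MvPolynomial.aeval c) (AlgHom.id k A) t = 0) : t = 0 := by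
  let b := Module.Free.chooseBasis k A
  refine (b.baseChange (MvPolynomial σ k)).ext_elem fun i => MvPolynomial.funext fun c => ?_
  have repr_map (s : MvPolynomial σ k ⊗[k] A) :
      (b.baseChange k).repr (Algebra.TensorProduct.map (MvPolynomial.aeval c) (AlgHom.id k A) s) i =
        MvPolynomial.eval c ((b.baseChange (MvPolynomial σ k)).repr s i) := by
    induction s with
    | zero => simp
    | tmul p a => simp [MvPolynomial.aeval_eq_eval]
    | add x y hx hy => simp only [map_add, Finsupp.add_apply, hx, hy]
  rw [← repr_map, h]
  simp

theorem tensorProduct_mvPolynomial (σ : Type*) (h : SatisfiesPolynomialIdentity k A) :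
    SatisfiesPolynomialIdentity k (MvPolynomial σ k ⊗[k] A) := by
  obtain ⟨n, f, hf, hv⟩ := h
  refine ⟨n, f, hf, fun v => eq_zero_of_forall_map_aeval_eq_zero fun c => ?_⟩
  let φ : MvPolynomial σ k ⊗[k] A →ₐ[k] A := (Algebra.TensorProduct.lid k A).toAlgHom.comp
    (Algebra.TensorProduct.map (MvPolynomial.aeval c) (AlgHom.id k A))
  have hφ : φ.comp (FreeAlgebra.lift k v) = FreeAlgebra.lift k (φ ∘ v) := by ext; simp
  refine (Algebra.TensorProduct.lid k A).injective ?_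
  rw [map_zero]
  exact (DFunLike.congr_fun hφ f).trans (hv _)

theorem tensorProduct (C : Type*) [CommRing C] [Algebra k C]
    (h : SatisfiesPolynomialIdentity k A) : SatisfiesPolynomialIdentity k (C ⊗[k] A) :=
  (h.tensorProduct_mvPolynomial C).of_surjective
    (Algebra.TensorProduct.map (MvPolynomial.aeval id) (AlgHom.id k A))
    (TensorProduct.map_surjective (fun c => ⟨MvPolynomial.X c, MvPolynomial.aeval_X _ _⟩)
      Function.surjective_id)

end BaseChange

end SatisfiesPolynomialIdentity

theorem cons_suffix_iff_getElem?_reverse {α : Type*} {i : α} {u w : List α} :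
    i :: u <:+ w ↔ u <:+ w ∧ w.reverse[u.length]? = some i := by
  constructor
  · rintro ⟨t, rfl⟩
    exact ⟨⟨t ++ [i], by simp⟩, by simp⟩
  · rintro ⟨⟨t, rfl⟩, h⟩
    rcases t.eq_nil_or_concat with rfl | ⟨t, a, rfl⟩
    · simp at h
    · obtain rfl : a = i := by simpa using h
      exact ⟨t, by simp⟩

section Shift

variable {k A M : Type*} [CommRing k] [Ring A] [Algebra k A] [AddCommGroup M] [Module k M]
  {act : A →ₐ[k] Module.End k M}

theorem act_prod_map_eq_ite_suffix {α : Type*} [DecidableEq α] (w : List α) {v : ℕ → M}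
    {e : ℕ → A} (he : ∀ i ≤ w.length, ∀ j < w.length,
      act (e j) (v i) = if i = j then v (i + 1) else 0) (u : List α) :
    act (u.map fun i => ∑ j ∈ Finset.range w.length,
        if w.reverse[j]? = some i then e j else 0).prod (v 0) =
      if u <:+ w then v u.length else 0 := by
  induction u with
  | nil => simp
  | cons i u ih =>
    rw [List.map_cons, List.prod_cons, map_mul, Module.End.mul_apply, ih]
    by_cases hu : u <:+ w
    · have letter (j : ℕ) (hj : j ∈ Finset.range w.length) :
          act (if w.reverse[j]? = some i then e j else 0) (v u.length) =
            if u.length = j then if w.reverse[j]? = some i then v (u.length + 1) else 0 else 0 := by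
        rw [apply_ite act, map_zero, DFunLike.ite_apply, LinearMap.zero_apply,
          he _ hu.length_le _ (Finset.mem_range.1 hj)]
        split_ifs <;> rfl
      rw [if_pos hu, map_sum, LinearMap.sum_apply, Finset.sum_congr rfl letter, Finset.sum_ite_eq]
      by_cases hi : w.reverse[u.length]? = some i
      · have : u.length < w.length := by simpa using (List.getElem?_eq_some_iff.1 hi).1
        simp [cons_suffix_iff_getElem?_reverse, hu, this]
      · simp [cons_suffix_iff_getElem?_reverse, hi]
    · rw [if_neg hu, map_zero, if_neg fun h => hu (cons_suffix_iff_getElem?_reverse.1 h).1]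

theorem not_satisfiesPolynomialIdentity_of_shift [IsDomain k] [Module.IsTorsionFree k M]
    (act : A →ₐ[k] Module.End k M)
    (h : ∀ d : ℕ, ∃ (v : ℕ → M) (e : ℕ → A), v d ≠ 0 ∧
      ∀ i ≤ d, ∀ j < d, act (e j) (v i) = if i = j then v (i + 1) else 0) :
    ¬ SatisfiesPolynomialIdentity k A := by
  classical
  rw [SatisfiesPolynomialIdentity.iff_monoidAlgebra]
  rintro ⟨n, F, hF, hid⟩
  obtain ⟨w, hw, w_min⟩ := F.coeff.support.exists_min_image FreeMonoid.length
    (Finsupp.support_nonempty_iff.2 (by simpa using hF))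
  obtain ⟨v, e, hv, he⟩ := h w.length
  -- Under this substitution only the suffixes of `w` survive on `v 0`, and by minimality of `w` no
  -- other monomial of the identity is one.
  let a (i : Fin n) : A := ∑ j ∈ Finset.range w.length,
    if w.toList.reverse[j]? = some i then e j else 0
  have act_word (u : FreeMonoid (Fin n)) (hu : u ∈ F.coeff.support) :
      act (FreeMonoid.lift a u) (v 0) = if u = w then v w.length else 0 := by
    rw [FreeMonoid.lift_apply]
    refine (act_prod_map_eq_ite_suffix w.toList he u.toList).trans ?_
    have suffix_iff : u.toList <:+ w.toList ↔ u = w :=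
      ⟨fun h => h.eq_of_length (le_antisymm h.length_le (w_min u hu)), fun h => h ▸ List.suffix_rfl⟩
    by_cases huw : u = w
    · rw [if_pos huw, if_pos (suffix_iff.2 huw), huw]
      rfl
    · rw [if_neg huw, if_neg (mt suffix_iff.1 huw)]
  have act_F : act (MonoidAlgebra.lift k A _ (FreeMonoid.lift a) F) (v 0) =
      F.coeff w • v w.length := by
    rw [MonoidAlgebra.lift_apply, Finsupp.sum, map_sum, LinearMap.sum_apply,
      Finset.sum_eq_single_of_mem w hw]
    · rw [map_smul, LinearMap.smul_apply, act_word w hw, if_pos rfl]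
    · intro u hu huw
      rw [map_smul, LinearMap.smul_apply, act_word u hu, if_neg huw, smul_zero]
  rw [hid, map_zero, LinearMap.zero_apply, eq_comm, smul_eq_zero] at act_F
  exact act_F.elim (Finsupp.mem_support_iff.1 hw) hv

end Shift

section Weight

variable {A M : Type*} [Ring A] [AddCommGroup M] {h y z : A}

theorem mul_pow_eq_of_weight (hy : h * y = y * h + z * y) (yz : Commute y z) (n : ℕ) :
    h * y ^ n = y ^ n * h + n • (z * y ^ n) := by
  induction n with
  | zero => simp
  | succ n ih =>
    rw [pow_succ, ← mul_assoc, ih, add_mul, mul_assoc, hy, smul_mul_assoc, succ_nsmul, mul_add,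
      ← mul_assoc (y ^ n) z, (yz.pow_left n).eq]
    simp only [mul_assoc]
    abel

variable {k : Type*} [CommRing k] [Algebra k A] [Module k M] {act : A →ₐ[k] Module.End k M}

theorem act_list_prod_sub_smul (hy : h * y = y * h + z * y) (hz : Commute h z)
    (yz : Commute y z) {v : M} (hv : act h v = 0) (i N : ℕ) (l : List ℕ) :
    act (l.map fun m : ℕ => h - (m : k) • z).prod (act (z ^ N * y ^ i) v) =
      (l.map fun m : ℕ => (i - m : k)).prod • act (z ^ (N + l.length) * y ^ i) v := by
  have act_factor (m n : ℕ) : act (h - (m : k) • z) (act (z ^ n * y ^ i) v) =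
      (i - m : k) • act (z ^ (n + 1) * y ^ i) v := by
    have : (h - (m : k) • z) * (z ^ n * y ^ i) =
        z ^ n * y ^ i * h + (i - m : k) • (z ^ (n + 1) * y ^ i) := by
      rw [sub_mul, ← mul_assoc, (hz.pow_right n).eq, mul_assoc, mul_pow_eq_of_weight hy yz,
        smul_mul_assoc, ← mul_assoc z, ← pow_succ', mul_add, mul_smul_comm, ← mul_assoc,
        ← mul_assoc, ← pow_succ, sub_smul,
        Nat.cast_smul_eq_nsmul k i, add_sub_assoc]
    rw [← Module.End.mul_apply, ← map_mul, this, map_add, map_smul, map_mul, LinearMap.add_apply,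
      Module.End.mul_apply, hv, map_zero, zero_add, LinearMap.smul_apply]
  induction l with
  | nil => simp
  | cons m l ih =>
    rw [List.map_cons, List.prod_cons, map_mul, Module.End.mul_apply, ih, map_smul, act_factor,
      smul_smul, List.map_cons, List.prod_cons, mul_comm, List.length_cons, add_assoc]

end Weight

theorem not_satisfiesPolynomialIdentity_of_weight {k A M : Type*} [Field k] [CharZero k] [Ring A]
    [Algebra k A] [AddCommGroup M] [Module k M] (act : A →ₐ[k] Module.End k M) {h y z : A}
    (hy : h * y = y * h + z * y) (hz : Commute h z) (yz : Commute y z)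
    (H : ∀ d N : ℕ, ∃ v : M, act h v = 0 ∧ act (z ^ N * y ^ d) v ≠ 0) :
    ¬ SatisfiesPolynomialIdentity k A := by
  refine not_satisfiesPolynomialIdentity_of_shift act fun d => ?_
  obtain ⟨v, hv, hv'⟩ := H d (d * d)
  let others (j : ℕ) : List ℕ := (List.range (d + 1)).erase j
  let c (i j : ℕ) : k := ((others j).map fun m : ℕ => (i - m : k)).prod
  have mem_others {i j : ℕ} : i ∈ others j ↔ i ≠ j ∧ i ≤ d := by
    rw [List.nodup_range.mem_erase_iff, List.mem_range, Nat.lt_succ_iff]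
  have c_self (j : ℕ) : c j j ≠ 0 := by
    simp only [c, ne_eq, List.prod_eq_zero_iff, List.mem_map, sub_eq_zero, Nat.cast_inj]
    rintro ⟨m, hm, rfl⟩
    exact (mem_others.1 hm).1 rfl
  have c_ne {i j : ℕ} (hi : i ≤ d) (hij : i ≠ j) : c i j = 0 :=
    List.prod_eq_zero (List.mem_map.2 ⟨i, mem_others.2 ⟨hij, hi⟩, sub_self _⟩)
  -- The product of the `h - m z` over `m ≠ j` kills every weight except the `j`-th, on which it
  -- multiplies by `z ^ d`; the powers of `z` in the vectors absorb that factor.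
  refine ⟨fun i => act (z ^ (d * i) * y ^ i) v,
    fun j => (c j j)⁻¹ • (y * ((others j).map fun m : ℕ => h - (m : k) • z).prod), hv',
    fun i hi j hj => ?_⟩
  have length_others : (others j).length = d := by
    rw [List.length_erase_of_mem (List.mem_range.2 (hj.trans (Nat.lt_add_one d))),
      List.length_range, Nat.add_sub_cancel_right]
  rw [map_smul, map_mul, LinearMap.smul_apply, Module.End.mul_apply,
    act_list_prod_sub_smul hy hz yz hv, map_smul, length_others]
  split_ifs with hij
  · subst hij
    rw [smul_smul, inv_mul_cancel₀ (c_self i), one_smul, ← Module.End.mul_apply, ← map_mul,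
      ← mul_assoc, (yz.pow_right _).eq, mul_assoc, ← pow_succ', ← mul_add_one]
  · rw [show ((others j).map fun m : ℕ => (i - m : k)).prod = 0 from c_ne hi hij, zero_smul,
      smul_zero]

section

attribute [local instance] LieRing.ofAssociativeRing

section PolynomialAction

open MvPolynomial

variable {k V ι : Type*} [CommRing k] [AddCommGroup V] [Module k V]

/-- The embedding of a free module into its symmetric algebra, realised as the polynomial ring on
a basis. -/
noncomputable def linearForm (b : Module.Basis ι k V) : V →ₗ[k] MvPolynomial ι k :=
  b.constr k X

theorem linearForm_injective (b : Module.Basis ι k V) : Function.Injective (linearForm b) := by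
  have : ⇑(linearForm b) = Finsupp.linearCombination k X ∘ b.repr :=
    funext fun x => b.constr_apply k X x
  rw [this]
  exact Function.Injective.comp (linearIndependent_X ι k) b.repr.injective

/-- The derivation of the symmetric algebra of a free module that extends a given endomorphism of
the module. -/
noncomputable def derivationOfEnd (b : Module.Basis ι k V) (f : Module.End k V) :
    Derivation k (MvPolynomial ι k) (MvPolynomial ι k) :=
  mkDerivation k fun i => linearForm b (f (b i))

@[simp]
theorem derivationOfEnd_linearForm (b : Module.Basis ι k V) (f : Module.End k V) (x : V) :
    derivationOfEnd b f (linearForm b x) = linearForm b (f x) := by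
  have : (derivationOfEnd b f).toLinearMap ∘ₗ linearForm b = linearForm b ∘ₗ f :=
    b.ext fun i => by simp [linearForm, derivationOfEnd]
  exact DFunLike.congr_fun this x

theorem derivation_ext_linearForm (b : Module.Basis ι k V)
    {D E : Derivation k (MvPolynomial ι k) (MvPolynomial ι k)}
    (h : ∀ x, D (linearForm b x) = E (linearForm b x)) : D = E :=
  derivation_ext fun i => by simpa [linearForm] using h (b i)

/-- `derivationOfEnd` as a homomorphism of Lie algebras. -/
noncomputable def derivationLieHom (b : Module.Basis ι k V) :
    Module.End k V →ₗ⁅k⁆ Derivation k (MvPolynomial ι k) (MvPolynomial ι k) where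
  toFun := derivationOfEnd b
  map_add' f g := derivation_ext_linearForm b fun x => by simp
  map_smul' c f := derivation_ext_linearForm b fun x => by simp
  map_lie' {f g} := derivation_ext_linearForm b fun x => by
    simp [Derivation.commutator_apply, LieRing.of_associative_ring_bracket]

/-- The action of `U(L)` on the symmetric algebra of a representation `ρ` of `L` in which each
element `x` of `L` acts by the derivation extending `ρ x`. -/
noncomputable def polynomialAction {L : Type*} [LieRing L] [LieAlgebra k L]
    (b : Module.Basis ι k V) (ρ : L →ₗ⁅k⁆ Module.End k V) :
    UniversalEnvelopingAlgebra k L →ₐ[k] Module.End k (MvPolynomial ι k) :=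
  UniversalEnvelopingAlgebra.lift k <|
    (LieModule.toEnd k (Derivation k (MvPolynomial ι k) (MvPolynomial ι k)) _).comp <|
      (derivationLieHom b).comp ρ

theorem polynomialAction_ι {L : Type*} [LieRing L] [LieAlgebra k L] (b : Module.Basis ι k V)
    (ρ : L →ₗ⁅k⁆ Module.End k V) (x : L) :
    polynomialAction b ρ (UniversalEnvelopingAlgebra.ι k x) =
      (derivationOfEnd b (ρ x)).toLinearMap := by
  rw [polynomialAction, UniversalEnvelopingAlgebra.lift_ι_apply]
  rfl

end PolynomialAction

theorem derivation_pow_mul_pow {R A : Type*} [CommSemiring R] [CommRing A] [Algebra R A]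
    (D : Derivation R A A) {c F : A} (hc : D c = 0) (hF : D (D F) = 0) (m n : ℕ) :
    (D.toLinearMap ^ n) (c * F ^ m) = m.descFactorial n • (c * D F ^ n * F ^ (m - n)) := by
  induction n with
  | zero => simp
  | succ n ih =>
    rw [pow_succ', Module.End.mul_apply, ih, map_nsmul, Derivation.coeFn_coe]
    simp only [Derivation.leibniz, Derivation.leibniz_pow, hc, hF,
      smul_eq_mul, nsmul_eq_mul, Nat.descFactorial_succ, Nat.sub_sub, Nat.cast_mul]
    ring

section LieIdentities

open UniversalEnvelopingAlgebra

variable {k L : Type*} [Field k] [CharZero k] [LieRing L] [LieAlgebra k L]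

theorem lie_eq_zero_of_satisfiesPolynomialIdentity_of_lie_eq_smul
    (hU : SatisfiesPolynomialIdentity k (UniversalEnvelopingAlgebra k L)) {x y : L} {c : k}
    (hxy : ⁅x, y⁆ = c • y) : ⁅x, y⁆ = 0 := by
  by_contra hne
  let b := Module.Basis.ofVectorSpace k L
  let act := polynomialAction b (LieAlgebra.ad k L)
  let D (u : L) := derivationOfEnd b (LieAlgebra.ad k L u)
  have act_ι (u : L) : act (ι k u) = (D u).toLinearMap := polynomialAction_ι b _ u
  have D_X (u w : L) : D u (linearForm b w) = linearForm b ⁅u, w⁆ := by simp [D]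
  refine not_satisfiesPolynomialIdentity_of_weight (h := ι k x) (y := ι k y)
    (z := algebraMap k _ c) act ?_ (Algebra.commute_algebraMap_right _ _)
    (Algebra.commute_algebraMap_right _ _) (fun d N => ⟨linearForm b x ^ d, ?_, ?_⟩) hU
  · rw [← Algebra.smul_def, ← map_smul, ← hxy, LieHom.map_lie,
      LieRing.of_associative_ring_bracket, add_sub_cancel]
  · rw [act_ι, Derivation.coeFn_coe, Derivation.leibniz_pow, D_X, lie_self, map_zero, smul_zero,
      smul_zero]
  · have hyyx : ⁅y, ⁅y, x⁆⁆ = 0 := by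
      rw [← lie_skew y x, hxy, lie_neg, lie_smul, lie_self, smul_zero, neg_zero]
    have pow_act := derivation_pow_mul_pow (D y) (c := 1) (F := linearForm b x)
      (D y).map_one_eq_zero (by rw [D_X, D_X, hyyx, map_zero]) d d
    rw [one_mul, one_mul, Nat.descFactorial_self, Nat.sub_self, pow_zero, mul_one, D_X] at pow_act
    rw [map_mul, Module.End.mul_apply, map_pow act (ι k y), act_ι, pow_act, ← map_pow,
      AlgHom.commutes, Module.algebraMap_end_apply]
    have hyx : linearForm b ⁅y, x⁆ ≠ 0 := by
      rwa [Ne, map_eq_zero_iff _ (linearForm_injective b), ← lie_skew, neg_eq_zero]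
    have hc : c ≠ 0 := by
      rintro rfl
      exact hne (by rw [hxy, zero_smul])
    exact smul_ne_zero (pow_ne_zero _ hc) (smul_ne_zero d.factorial_ne_zero (pow_ne_zero _ hyx))

/-- The representation of a Lie algebra `L` of nilpotency class at most two on `L × k` by affine
vector fields: in exponential coordinates, `u` acts as an infinitesimal translation. -/
noncomputable def affineRepresentation (hL : ∀ u v w : L, ⁅u, ⁅v, w⁆⁆ = 0) :
    L →ₗ⁅k⁆ Module.End k (L × k) where
  toFun u := LinearMap.inl k L k ∘ₗ
    ((2⁻¹ : k) • LieAlgebra.ad k L u ∘ₗ LinearMap.fst k L k + (LinearMap.snd k L k).smulRight u)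
  map_add' u v := by ext <;> simp
  map_smul' c u := by ext <;> simp [smul_comm c]
  map_lie' {u v} := by
    have halves : ⁅u, v⁆ = (2⁻¹ : k) • ⁅u, v⁆ - (2⁻¹ : k) • ⁅v, u⁆ := by
      rw [← lie_skew u v]
      module
    ext <;> simp [LieRing.of_associative_ring_bracket, hL, ← halves]

theorem affineRepresentation_apply (hL : ∀ u v w : L, ⁅u, ⁅v, w⁆⁆ = 0) (u w : L) (s : k) :
    affineRepresentation hL u (w, s) = ((2⁻¹ : k) • ⁅u, w⁆ + s • u, 0) :=
  rfl

theorem exists_quadric_of_affine_derivations {P : Type*} [CommRing P] [Algebra k P]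
    (hL : ∀ u v w : L, ⁅u, ⁅v, w⁆⁆ = 0) {D : L → Derivation k P P} {X : L →ₗ[k] P} {T : P}
    (D_T : ∀ u, D u T = X u) (D_X : ∀ u w, D u (X w) = (2⁻¹ : k) • X ⁅u, w⁆) (x y : L) :
    ∃ F : P, D x F = 0 ∧ D y F = (2 : k) • (X y * X ⁅x, y⁆) ∧
      D ⁅x, y⁆ F = X ⁅x, y⁆ * X ⁅x, y⁆ := by
  have central (u : L) : ⁅⁅x, y⁆, u⁆ = 0 := by rw [← lie_skew, hL, neg_zero]
  refine ⟨T * X ⁅x, y⁆ - (2 : k) • (X x * X y), ?_, ?_, ?_⟩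
  · simp [D_T, D_X, hL, mul_comm]
  · have X_yx : X ⁅y, x⁆ = -X ⁅x, y⁆ := by rw [← lie_skew, map_neg]
    have D_mul : D y (X x * X y) = -(2⁻¹ : k) • (X y * X ⁅x, y⁆) := by
      rw [Derivation.leibniz, D_X, D_X, lie_self, X_yx, map_zero, smul_zero, smul_zero, zero_add,
        smul_neg, smul_neg, smul_eq_mul, mul_smul_comm, neg_smul]
    rw [map_sub, Derivation.map_smul, D_mul, Derivation.leibniz, D_T, D_X, hL, map_zero, smul_zero,
      smul_zero, zero_add, smul_eq_mul, mul_comm]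
    module
  · simp [D_T, D_X, central]

theorem derivation_pow_derivation_pow_ne_zero {R A : Type*} [CommSemiring R] [CommRing A]
    [IsDomain A] [CharZero A] [Algebra R A] {D E : Derivation R A A} {F : A} (hD : D (D F) = 0)
    (hED : E (D F) = 0) (hE : E (E F) = 0) (hDF : D F ≠ 0) (hEF : E F ≠ 0) (m n : ℕ) :
    (E.toLinearMap ^ n) ((D.toLinearMap ^ m) (F ^ (m + n))) ≠ 0 := by
  have D_pow := derivation_pow_mul_pow D D.map_one_eq_zero hD (m + n) m
  have E_pow := derivation_pow_mul_pow E (c := D F ^ m)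
    (by rw [E.leibniz_pow, hED, smul_zero, smul_zero]) hE n n
  rw [one_mul, one_mul, Nat.add_sub_cancel_left] at D_pow
  rw [Nat.sub_self, pow_zero, mul_one, Nat.descFactorial_self] at E_pow
  rw [D_pow, map_nsmul, E_pow]
  refine smul_ne_zero ?_ (smul_ne_zero n.factorial_ne_zero
    (mul_ne_zero (pow_ne_zero _ hDF) (pow_ne_zero _ hEF)))
  rw [Ne, Nat.descFactorial_eq_zero_iff_lt]
  simp

theorem lie_eq_zero_of_satisfiesPolynomialIdentity_of_lie_lie_eq_zero
    (hU : SatisfiesPolynomialIdentity k (UniversalEnvelopingAlgebra k L))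
    (hL : ∀ u v w : L, ⁅u, ⁅v, w⁆⁆ = 0) (x y : L) : ⁅x, y⁆ = 0 := by
  by_contra hne
  let b := Module.Basis.ofVectorSpace k (L × k)
  let act := polynomialAction b (affineRepresentation hL)
  let D (u : L) := derivationOfEnd b (affineRepresentation hL u)
  have act_ι (u : L) : act (ι k u) = (D u).toLinearMap := polynomialAction_ι b _ u
  let X := linearForm b ∘ₗ LinearMap.inl k L k
  have X_ne_zero {u : L} (hu : u ≠ 0) : X u ≠ 0 := (map_ne_zero_iff X
    ((linearForm_injective b).comp LinearMap.inl_injective)).2 hu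
  have D_T (u : L) : D u (linearForm b (0, 1)) = X u := by
    simp [D, X, affineRepresentation_apply]
  have D_X (u w : L) : D u (X w) = (2⁻¹ : k) • X ⁅u, w⁆ := by
    simp [D, X, affineRepresentation_apply, ← map_smul]
  obtain ⟨F, D_x_F, D_y_F, D_z_F⟩ := exists_quadric_of_affine_derivations hL D_T D_X x y
  have hz : X ⁅x, y⁆ ≠ 0 := X_ne_zero hne
  have hy : X y ≠ 0 := X_ne_zero (by rintro rfl; exact hne (lie_zero x))
  have central (u : L) : ⁅⁅x, y⁆, u⁆ = 0 := by rw [← lie_skew, hL, neg_zero]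
  have ι_central (u : L) : Commute (ι k u) (ι k ⁅x, y⁆) :=
    sub_eq_zero.1 <| by
      rw [← LieRing.of_associative_ring_bracket, ← LieHom.map_lie, hL, map_zero]
  refine not_satisfiesPolynomialIdentity_of_weight (h := ι k y * ι k x) (y := ι k y)
    (z := ι k ⁅x, y⁆) act ?_ ((ι_central y).mul_left (ι_central x)) (ι_central y)
    (fun d N => ⟨F ^ (d + N), ?_, ?_⟩) hU
  · rw [← (ι_central y).eq, LieHom.map_lie, LieRing.of_associative_ring_bracket, mul_sub]
    simp only [mul_assoc, add_sub_cancel]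
  · rw [map_mul, act_ι x, Module.End.mul_apply, Derivation.coeFn_coe, Derivation.leibniz_pow,
      D_x_F, smul_zero, smul_zero, map_zero]
  · rw [map_mul, Module.End.mul_apply, map_pow act, map_pow act, act_ι, act_ι]
    refine derivation_pow_derivation_pow_ne_zero ?_ ?_ ?_ ?_ ?_ d N
    · simp [D_y_F, D_X, hL]
    · simp [D_y_F, D_X, central]
    · simp [D_z_F, D_X]
    · simp [D_y_F, hy, hz]
    · simp [D_z_F, hz]

end LieIdentities

section UniversalEnvelopingAlgebra

open UniversalEnvelopingAlgebra

theorem adjoin_range_universalEnvelopingAlgebra_ι (R L : Type*) [CommRing R] [LieRing L]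
    [LieAlgebra R L] :
    Algebra.adjoin R (Set.range (ι R : L → UniversalEnvelopingAlgebra R L)) = ⊤ := by
  have range_ι : Set.range (ι R : L → UniversalEnvelopingAlgebra R L) =
      mkAlgHom R L '' Set.range (TensorAlgebra.ι R) := by
    rw [← Set.range_comp]
    rfl
  rw [range_ι, ← AlgHom.map_adjoin, TensorAlgebra.adjoin_range_ι, Algebra.map_top,
    AlgHom.range_eq_top]
  exact RingCon.mkₐ_surjective _

theorem surjective_of_forall_ι_mem_range {R L A : Type*} [CommRing R] [LieRing L] [LieAlgebra R L]
    [Ring A] [Algebra R A] (φ : A →ₐ[R] UniversalEnvelopingAlgebra R L)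
    (h : ∀ x : L, ι R x ∈ φ.range) : Function.Surjective φ := by
  rw [← AlgHom.range_eq_top, eq_top_iff, ← adjoin_range_universalEnvelopingAlgebra_ι,
    Algebra.adjoin_le_iff]
  exact Set.range_subset_iff.2 h

/-- The canonical homomorphism `x ↦ 1 ⊗ x` from a Lie algebra to its extension of scalars. -/
def toExtendScalars (R A L : Type*) [CommRing R] [CommRing A] [Algebra R A] [LieRing L]
    [LieAlgebra R L] : L →ₗ⁅R⁆ A ⊗[R] L :=
  { TensorProduct.mk R A L 1 with
    map_lie' {x y} := by simp [LieAlgebra.ExtendScalars.bracket_tmul] }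

namespace SatisfiesPolynomialIdentity

variable {k L : Type*} [Field k] [LieRing L] [LieAlgebra k L]

theorem universalEnvelopingAlgebra_of_surjective {L' : Type*} [LieRing L'] [LieAlgebra k L']
    (hU : SatisfiesPolynomialIdentity k (UniversalEnvelopingAlgebra k L)) (f : L →ₗ⁅k⁆ L')
    (hf : Function.Surjective f) :
    SatisfiesPolynomialIdentity k (UniversalEnvelopingAlgebra k L') := by
  refine hU.of_surjective (lift k ((ι k).comp f)) (surjective_of_forall_ι_mem_range _ fun y => ?_)
  obtain ⟨x, rfl⟩ := hf y
  exact ⟨ι k x, lift_ι_apply k _ x⟩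

theorem universalEnvelopingAlgebra_baseChange [Infinite k] (K : Type*) [Field K] [Algebra k K]
    (hU : SatisfiesPolynomialIdentity k (UniversalEnvelopingAlgebra k L)) :
    SatisfiesPolynomialIdentity K (UniversalEnvelopingAlgebra K (K ⊗[k] L)) := by
  let : Algebra k (UniversalEnvelopingAlgebra K (K ⊗[k] L)) :=
    Algebra.compHom _ (algebraMap k K)
  have : IsScalarTower k K (UniversalEnvelopingAlgebra K (K ⊗[k] L)) :=
    .of_algebraMap_eq fun _ => rfl
  let f : L →ₗ⁅k⁆ UniversalEnvelopingAlgebra K (K ⊗[k] L) :=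
    { (ι K : K ⊗[k] L →ₗ⁅K⁆ _).toLinearMap.restrictScalars k ∘ₗ
        (toExtendScalars k K L).toLinearMap with
      map_lie' {x y} :=
        (congrArg (ι K) ((toExtendScalars k K L).map_lie x y)).trans (LieHom.map_lie _ _ _) }
  let φ : K ⊗[k] UniversalEnvelopingAlgebra k L →ₐ[K] UniversalEnvelopingAlgebra K (K ⊗[k] L) :=
    Algebra.TensorProduct.lift (Algebra.ofId K _) (lift k f) fun c _ => Algebra.commutes c _
  refine ((hU.tensorProduct K).extend_scalars (K := K)).of_surjective φ
    (surjective_of_forall_ι_mem_range _ fun t => ?_)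
  induction t with
  | zero => rw [map_zero]; exact zero_mem _
  | tmul a x =>
    refine ⟨a ⊗ₜ ι k x, ?_⟩
    calc φ (a ⊗ₜ ι k x) = algebraMap K _ a * lift k f (ι k x) := rfl
      _ = a • ι K ((1 : K) ⊗ₜ[k] x) := by rw [lift_ι_apply, Algebra.smul_def]; rfl
      _ = ι K (a ⊗ₜ x) := by rw [← map_smul, TensorProduct.smul_tmul', smul_eq_mul, mul_one]
  | add s t hs ht => rw [map_add]; exact add_mem hs ht

end SatisfiesPolynomialIdentity

end UniversalEnvelopingAlgebra

theorem exists_hasEigenvalue_of_not_isNilpotent {K V : Type*} [Field K] [IsAlgClosed K]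
    [AddCommGroup V] [Module K V] [FiniteDimensional K V] {f : Module.End K V}
    (hf : ¬ IsNilpotent f) : ∃ c ≠ (0 : K), f.HasEigenvalue c := by
  contrapose! hf
  have splits := IsAlgClosed.splits f.charpoly
  have roots_eq : f.charpoly.roots = Multiset.replicate f.charpoly.natDegree 0 := by
    rw [splits.natDegree_eq_card_roots]
    refine Multiset.eq_replicate_card.2 fun c hc => of_not_not fun hc0 => hf c hc0 ?_
    exact (f.hasEigenvalue_iff_isRoot_charpoly c).2 (Polynomial.isRoot_of_mem_roots hc)
  rw [LinearMap.isNilpotent_iff_charpoly, splits.eq_prod_roots_of_monic f.charpoly_monic, roots_eq,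
    LinearMap.charpoly_natDegree, Multiset.map_replicate, Multiset.prod_replicate, map_zero,
    sub_zero]

theorem isLieAbelian_of_lowerCentralSeries_one_le_two {k L : Type*} [CommRing k] [LieRing L]
    [LieAlgebra k L] [LieRing.IsNilpotent L]
    (h : LieModule.lowerCentralSeries k L L 1 ≤ LieModule.lowerCentralSeries k L L 2) :
    IsLieAbelian L := by
  have one_le (n : ℕ) :
      LieModule.lowerCentralSeries k L L 1 ≤ LieModule.lowerCentralSeries k L L n := by
    induction n with
    | zero => exact le_top
    | succ n ih =>
      refine h.trans ?_
      rw [LieModule.lowerCentralSeries_succ _ _ _ 1, LieModule.lowerCentralSeries_succ _ _ _ n]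
      exact LieSubmodule.mono_lie_right _ ih
  obtain ⟨n, hn⟩ := (LieModule.isNilpotent_iff k L L).1 inferInstance
  refine ⟨fun x y => ?_⟩
  rw [← LieSubmodule.mem_bot (R := k) (L := L), ← hn]
  exact one_le n (LieSubmodule.lie_mem_lie trivial trivial)

section CharZero

variable {k L : Type*} [Field k] [CharZero k] [LieRing L] [LieAlgebra k L]

theorem isNilpotent_of_satisfiesPolynomialIdentity [IsAlgClosed k] [FiniteDimensional k L]
    (hU : SatisfiesPolynomialIdentity k (UniversalEnvelopingAlgebra k L)) :
    LieRing.IsNilpotent L := by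
  rw [LieAlgebra.isNilpotent_iff_forall (R := k)]
  intro x
  by_contra hx
  obtain ⟨c, hc, hcx⟩ := exists_hasEigenvalue_of_not_isNilpotent hx
  obtain ⟨y, hy⟩ := hcx.exists_hasEigenvector
  have hxy : ⁅x, y⁆ = c • y := hy.apply_eq_smul
  refine smul_ne_zero hc hy.2 ?_
  rw [← hxy, lie_eq_zero_of_satisfiesPolynomialIdentity_of_lie_eq_smul hU hxy]

theorem lowerCentralSeries_one_le_two_of_satisfiesPolynomialIdentity
    (hU : SatisfiesPolynomialIdentity k (UniversalEnvelopingAlgebra k L)) :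
    LieModule.lowerCentralSeries k L L 1 ≤ LieModule.lowerCentralSeries k L L 2 := by
  set I : LieIdeal k L := LieModule.lowerCentralSeries k L L 2
  let π : L →ₗ⁅k⁆ L ⧸ I :=
    { (LieSubmodule.Quotient.mk' I : L →ₗ[k] L ⧸ I) with
      map_lie' {x y} := LieSubmodule.Quotient.mk_bracket I x y }
  have hπ : Function.Surjective π := LieSubmodule.Quotient.surjective_mk' I
  have π_eq_zero {x : L} : π x = 0 ↔ x ∈ I := LieSubmodule.Quotient.mk_eq_zero I
  have lie_lie (u v w : L ⧸ I) : ⁅u, ⁅v, w⁆⁆ = 0 := by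
    obtain ⟨⟨x, rfl⟩, ⟨y, rfl⟩, ⟨z, rfl⟩⟩ := hπ u, hπ v, hπ w
    rw [← LieHom.map_lie, ← LieHom.map_lie, π_eq_zero]
    exact LieSubmodule.lie_mem_lie trivial (LieSubmodule.lie_mem_lie trivial trivial)
  rw [LieModule.lowerCentralSeries_succ, LieSubmodule.lie_le_iff]
  intro x _ y _
  rw [← π_eq_zero, LieHom.map_lie]
  exact lie_eq_zero_of_satisfiesPolynomialIdentity_of_lie_lie_eq_zero
    (hU.universalEnvelopingAlgebra_of_surjective π hπ) lie_lie _ _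

theorem isLieAbelian_of_satisfiesPolynomialIdentity [FiniteDimensional k L]
    (hU : SatisfiesPolynomialIdentity k (UniversalEnvelopingAlgebra k L)) : IsLieAbelian L := by
  let K := AlgebraicClosure k
  have hUK := hU.universalEnvelopingAlgebra_baseChange K
  have : LieRing.IsNilpotent (K ⊗[k] L) := isNilpotent_of_satisfiesPolynomialIdentity hUK
  have abelian : IsLieAbelian (K ⊗[k] L) := isLieAbelian_of_lowerCentralSeries_one_le_two
    (lowerCentralSeries_one_le_two_of_satisfiesPolynomialIdentity hUK)
  have injective : Function.Injective (toExtendScalars k K L) :=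
    Module.FaithfullyFlat.tensorProduct_mk_injective L
  exact injective.isLieAbelian abelian

end CharZero

section Finiteness

variable {R A : Type*} [CommRing R] [Ring A] [Algebra R A] {V : Submodule R A}

theorem list_prod_mem_pow {l : List A} (hl : ∀ a ∈ l, a ∈ V) : l.prod ∈ V ^ l.length := by
  induction l with
  | nil => exact Submodule.one_le.1 le_rfl
  | cons a l ih =>
    rw [List.prod_cons, List.length_cons, pow_succ']
    exact Submodule.mul_mem_mul (hl a List.mem_cons_self)
      (ih fun b hb => hl b (List.mem_cons_of_mem a hb))

theorem exists_pow_succ_mem_pow_of_isIntegral {a : A} (ha : IsIntegral R a) (hV : 1 ≤ V)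
    (haV : a ∈ V) : ∃ q : ℕ, a ^ (q + 1) ∈ V ^ q := by
  classical
  obtain ⟨P, hP, hPa⟩ := ha
  refine ⟨P.natDegree, ?_⟩
  have adjoin_le : Subalgebra.toSubmodule (Algebra.adjoin R {a}) ≤ V ^ P.natDegree := by
    rw [← Submodule.span_range_natDegree_eq_adjoin hP hPa, Submodule.span_le]
    intro b hb
    obtain ⟨i, hi, rfl⟩ := Finset.mem_image.1 hb
    exact pow_le_pow_right' hV (Finset.mem_range.1 hi).le (Submodule.pow_mem_pow V haV i)
  exact adjoin_le (pow_mem (Algebra.self_mem_adjoin_singleton R a) _)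

theorem prod_sub_prod_mem_pow_of_perm {s : Set A} (hs : s ⊆ V)
    (comm : ∀ a ∈ s, ∀ b ∈ s, a * b - b * a ∈ V) {l l' : List A} (h : l.Perm l')
    (hl : ∀ a ∈ l, a ∈ s) : l.prod - l'.prod ∈ V ^ (l.length - 1) := by
  induction h with
  | nil => rw [sub_self]; exact zero_mem _
  | @cons a l l' h ih =>
    have ha := hs (hl a List.mem_cons_self)
    rcases l.eq_nil_or_concat with rfl | ⟨_, _, rfl⟩
    · rw [h.nil_eq, sub_self]
      exact zero_mem _
    · have := Submodule.mul_mem_mul ha (ih fun b hb => hl b (List.mem_cons_of_mem a hb))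
      rw [mul_sub, ← pow_succ'] at this
      simpa using this
  | swap a b l =>
    have hb := hl b (by simp)
    have ha := hl a (by simp)
    have := Submodule.mul_mem_mul (comm b hb a ha)
      (list_prod_mem_pow (l := l) fun c hc => hs (hl c (by simp [hc])))
    simpa [pow_succ', sub_mul, mul_assoc] using this
  | trans h _ ih ih' =>
    rw [← sub_add_sub_cancel]
    refine add_mem (ih hl) ?_
    rw [h.length_eq]
    exact ih' fun a ha => hl a (h.mem_iff.2 ha)

theorem list_prod_mem_pow_length_pred {s : Finset A} (hs : (s : Set A) ⊆ V)
    (comm : ∀ a ∈ s, ∀ b ∈ s, a * b - b * a ∈ V) {q : A → ℕ}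
    (hq : ∀ a ∈ s, a ^ (q a + 1) ∈ V ^ q a) {l : List A} (hl : ∀ a ∈ l, a ∈ s)
    (hlq : ∑ a ∈ s, q a < l.length) : l.prod ∈ V ^ (l.length - 1) := by
  classical
  have sum_count : ∑ a ∈ s, l.count a = l.length := by
    simpa using Multiset.sum_count_eq_card (s := s) (m := (l : Multiset A)) hl
  obtain ⟨a, ha, hqa⟩ := Finset.exists_lt_of_sum_lt (hlq.trans_eq sum_count.symm)
  obtain ⟨l', h⟩ : ∃ l', l.Perm (List.replicate (q a + 1) a ++ l') :=
    (List.replicate_sublist_iff.2 hqa).exists_perm_append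
  have length_eq : q a + l'.length = l.length - 1 := by
    rw [h.length_eq, List.length_append, List.length_replicate]
    omega
  -- Some `a` occurs more than `q a` times; gathering these occurrences at the front of the word
  -- changes the product only by an element of `V ^ (l.length - 1)`.
  rw [← sub_add_cancel l.prod]
  refine add_mem (prod_sub_prod_mem_pow_of_perm hs comm h hl) ?_
  rw [List.prod_append, List.prod_replicate, ← length_eq, pow_add]
  exact Submodule.mul_mem_mul (hq a ha) (list_prod_mem_pow fun b hb =>
    hs (hl b (h.mem_iff.2 (List.mem_append_right _ hb))))

theorem exists_span_pow_succ_le {s : Finset A} (hs : 1 ∈ s) (integral : ∀ a ∈ s, IsIntegral R a)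
    (comm : ∀ a ∈ s, ∀ b ∈ s, a * b - b * a ∈ Submodule.span R (s : Set A)) :
    ∃ N : ℕ, Submodule.span R (s : Set A) ^ (N + 1) ≤ Submodule.span R (s : Set A) ^ N := by
  set V := Submodule.span R (s : Set A)
  have hsV : (s : Set A) ⊆ V := Submodule.subset_span
  have hV : 1 ≤ V := Submodule.one_le.2 (hsV hs)
  choose! q hq using fun a ha => exists_pow_succ_mem_pow_of_isIntegral (integral a ha) hV (hsV ha)
  refine ⟨∑ a ∈ s, q a, ?_⟩
  rw [Submodule.span_pow, Submodule.span_le]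
  intro w hw
  obtain ⟨f, rfl⟩ := Set.mem_pow.1 hw
  have := list_prod_mem_pow_length_pred hsV comm hq (l := List.ofFn fun i => (f i : A))
    (by simp [List.mem_ofFn]) (by simp)
  simpa using this

theorem module_finite_of_isIntegral_of_lie_mem_span {s : Finset A}
    (adjoin_eq_top : Algebra.adjoin R (s : Set A) = ⊤) (hs : 1 ∈ s)
    (integral : ∀ a ∈ s, IsIntegral R a)
    (comm : ∀ a ∈ s, ∀ b ∈ s, a * b - b * a ∈ Submodule.span R (s : Set A)) :
    Module.Finite R A := by
  obtain ⟨N, hN⟩ := exists_span_pow_succ_le hs integral comm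
  set V := Submodule.span R (s : Set A)
  have hsV : (s : Set A) ⊆ V := Submodule.subset_span
  have hV : 1 ≤ V := Submodule.one_le.2 (hsV hs)
  have pow_le (m : ℕ) : V ^ m ≤ V ^ N := by
    induction m with
    | zero => exact pow_le_pow_right' hV N.zero_le
    | succ m ih =>
      rw [pow_succ]
      exact (mul_le_mul' ih le_rfl).trans hN
  let B : Subalgebra R A := (V ^ N).toSubalgebra (Submodule.one_le.1 (pow_le 0)) fun a b ha hb =>
    pow_le (N + N) (pow_add V N N ▸ Submodule.mul_mem_mul ha hb)
  have hB : B = ⊤ := by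
    have V_le : V ≤ V ^ N := by simpa only [pow_one] using pow_le 1
    rw [eq_top_iff, ← adjoin_eq_top, Algebra.adjoin_le_iff]
    exact fun a ha => V_le (hsV ha)
  have fg : (V ^ N).FG := (Submodule.fg_span s.finite_toSet).pow N
  refine ⟨?_⟩
  rwa [← Algebra.top_toSubmodule, ← hB]

end Finiteness

section StandardIdentity

/-- The standard polynomial `∑ σ, sign σ • X (σ 0) * ⋯ * X (σ (n - 1))`. -/
noncomputable def standardPolynomial (k : Type*) [CommRing k] (n : ℕ) : FreeAlgebra k (Fin n) :=
  ∑ σ : Equiv.Perm (Fin n), (Equiv.Perm.sign σ : ℤ) •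
    (List.ofFn fun i => FreeAlgebra.ι k (σ i)).prod

theorem basisFreeMonoid_eq_prod_map_ι (k : Type*) [CommRing k] {X : Type*} (l : List X) :
    FreeAlgebra.basisFreeMonoid k X (FreeMonoid.ofList l) = (l.map (FreeAlgebra.ι k)).prod := by
  simp [FreeAlgebra.basisFreeMonoid, FreeAlgebra.equivMonoidAlgebraFreeMonoid]

theorem standardPolynomial_ne_zero (k : Type*) [CommRing k] [Nontrivial k] (n : ℕ) :
    standardPolynomial k n ≠ 0 := by
  let word (σ : Equiv.Perm (Fin n)) := FreeMonoid.ofList (List.ofFn σ)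
  have word_injective : Function.Injective word :=
    FreeMonoid.ofList.injective.comp (List.ofFn_injective.comp DFunLike.coe_injective)
  have linearIndependent :=
    (FreeAlgebra.basisFreeMonoid k (Fin n)).linearIndependent.comp word word_injective
  have eq_sum : standardPolynomial k n = ∑ σ : Equiv.Perm (Fin n),
      ((Equiv.Perm.sign σ : ℤ) : k) • FreeAlgebra.basisFreeMonoid k (Fin n) (word σ) := by
    simp only [standardPolynomial, word, basisFreeMonoid_eq_prod_map_ι, List.map_ofFn,
      Int.cast_smul_eq_zsmul, Function.comp_def]
  intro h
  rw [eq_sum] at h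
  simpa using Fintype.linearIndependent_iff.1 linearIndependent _ h 1

theorem lift_standardPolynomial {k R A : Type*} [CommRing k] [CommRing R] [Ring A] [Algebra k A]
    [Algebra R A] {n : ℕ} (v : Fin n → A) :
    FreeAlgebra.lift k v (standardPolynomial k n) =
      (MultilinearMap.mkPiAlgebraFin R n A).alternatization v := by
  simp [standardPolynomial, MultilinearMap.alternatization_apply, map_list_prod, List.map_ofFn,
    Function.comp_def, Units.smul_def]

theorem alternatingMap_eq_zero_of_span_eq_top {R M N ι κ : Type*} [CommRing R] [AddCommGroup M]
    [Module R M] [AddCommGroup N] [Module R N] [Fintype ι] [Fintype κ] {s : κ → M}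
    (hs : Submodule.span R (Set.range s) = ⊤) (card_lt : Fintype.card κ < Fintype.card ι)
    (f : M [⋀^ι]→ₗ[R] N) : f = 0 := by
  classical
  ext v
  have v_eq_sum (i : ι) : ∃ c : κ → R, ∑ j, c j • s j = v i := by
    rw [← Submodule.mem_span_range_iff_exists_fun, hs]
    exact Submodule.mem_top
  choose c hc using v_eq_sum
  obtain rfl : (fun i => ∑ j, c i j • s j) = v := funext hc
  rw [← AlternatingMap.coe_multilinearMap, MultilinearMap.map_sum]
  refine Finset.sum_eq_zero fun r _ => ?_
  have not_injective : ¬ Function.Injective fun i => s (r i) := fun h =>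
    card_lt.not_ge (Fintype.card_le_of_injective r h.of_comp)
  rw [MultilinearMap.map_smul_univ, AlternatingMap.coe_multilinearMap,
    f.map_eq_zero_of_not_injective _ not_injective, smul_zero]

theorem SatisfiesPolynomialIdentity.of_finite (k R A : Type*) [CommRing k] [Nontrivial k]
    [CommRing R] [Ring A] [Algebra k A] [Algebra R A] [Module.Finite R A] :
    SatisfiesPolynomialIdentity k A := by
  obtain ⟨n, s, hs⟩ := Module.Finite.exists_fin (R := R) (M := A)
  refine ⟨n + 1, standardPolynomial k (n + 1), standardPolynomial_ne_zero k _, fun v => ?_⟩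
  rw [lift_standardPolynomial (R := R)]
  exact DFunLike.congr_fun (alternatingMap_eq_zero_of_span_eq_top hs (by simp) _) v

end StandardIdentity

section AdditivePolynomial

open Polynomial

/-- The `p`-polynomials `∑ cⱼ X ^ p ^ j`, on which evaluation commutes with the adjoint
representation in characteristic `p`. -/
noncomputable def additivePolynomials (k : Type*) [CommRing k] (p : ℕ) : Submodule k k[X] :=
  Submodule.span k (Set.range fun j : ℕ => X ^ p ^ j)

theorem coeff_zero_of_mem_additivePolynomials {k : Type*} [CommRing k] {p : ℕ} (hp : p ≠ 0)
    {P : k[X]} (hP : P ∈ additivePolynomials k p) : P.coeff 0 = 0 := by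
  have le_ker : additivePolynomials k p ≤ LinearMap.ker (lcoeff k 0) := by
    rw [additivePolynomials, Submodule.span_le]
    rintro _ ⟨j, rfl⟩
    rw [SetLike.mem_coe, LinearMap.mem_ker, lcoeff_apply, coeff_X_pow,
      if_neg (pow_ne_zero j hp).symm]
  exact le_ker hP

theorem exists_monic_mem_additivePolynomials_aeval_eq_zero {k A : Type*} [Field k] [Ring A]
    [Algebra k A] [FiniteDimensional k A] {p : ℕ} (hp : 1 < p) (a : A) :
    ∃ P ∈ additivePolynomials k p, P.Monic ∧ aeval a P = 0 := by
  have linearIndependent_X_pow : LinearIndependent k fun j : ℕ => (X : k[X]) ^ p ^ j := by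
    simpa only [coe_basisMonomials, Function.comp_def, monomial_one_right_eq_X_pow] using
      (basisMonomials k).linearIndependent.comp _ (Nat.pow_right_injective hp)
  have not_linearIndependent :=
    Module.Finite.not_linearIndependent_of_infinite (R := k) fun j : ℕ => a ^ p ^ j
  rw [linearIndependent_iff] at linearIndependent_X_pow not_linearIndependent
  push Not at not_linearIndependent
  obtain ⟨c, hca, hc⟩ := not_linearIndependent
  set P := Finsupp.linearCombination k (fun j : ℕ => (X : k[X]) ^ p ^ j) c with P_eq
  have hP : P ≠ 0 := fun h => hc (linearIndependent_X_pow c h)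
  have aeval_P : aeval a P = 0 := by
    rw [← hca, P_eq, ← AlgHom.coe_toLinearMap, Finsupp.apply_linearCombination]
    simp only [Function.comp_def, AlgHom.toLinearMap_apply, map_pow, aeval_X]
  have P_mem : P ∈ additivePolynomials k p :=
    Finsupp.mem_span_range_iff_exists_finsupp.2 ⟨c, rfl⟩
  refine ⟨P.leadingCoeff⁻¹ • P, Submodule.smul_mem _ _ P_mem, ?_, ?_⟩
  · rw [smul_eq_C_mul, mul_comm]
    exact monic_mul_leadingCoeff_inv hP
  · rw [map_smul, aeval_P, smul_zero]

theorem ad_pow_char_pow {k A : Type*} [Field k] [Ring A] [Algebra k A] (p : ℕ) [Fact p.Prime]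
    [CharP k p] (a : A) (j : ℕ) :
    LieAlgebra.ad k A (a ^ p ^ j) = LieAlgebra.ad k A a ^ p ^ j := by
  nontriviality A
  have : CharP (Module.End k A) p :=
    charP_of_injective_algebraMap (algebraMap k (Module.End k A)).injective p
  rw [LieAlgebra.ad_eq_lmul_left_sub_lmul_right, Pi.sub_apply, Pi.sub_apply,
    sub_pow_char_pow_of_commute p j (LinearMap.commute_mulLeft_right a a), LinearMap.pow_mulLeft,
    LinearMap.pow_mulRight]

theorem ad_aeval_of_mem_additivePolynomials {k A : Type*} [Field k] [Ring A] [Algebra k A] (p : ℕ)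
    [Fact p.Prime] [CharP k p] {P : k[X]} (hP : P ∈ additivePolynomials k p) (a : A) :
    LieAlgebra.ad k A (aeval a P) = aeval (LieAlgebra.ad k A a) P := by
  let φ : k[X] →ₗ[k] Module.End k A := (LieAlgebra.ad k A : A →ₗ[k] _) ∘ₗ (aeval a).toLinearMap
  have eqOn : Set.EqOn φ (aeval (LieAlgebra.ad k A a)).toLinearMap
      (Set.range fun j : ℕ => X ^ p ^ j) := by
    rintro _ ⟨j, rfl⟩
    simpa [φ] using ad_pow_char_pow p a j
  exact LinearMap.eqOn_span eqOn hP

theorem aeval_ad_map_apply {k L L' : Type*} [CommRing k] [LieRing L] [LieAlgebra k L] [LieRing L']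
    [LieAlgebra k L'] (f : L →ₗ⁅k⁆ L') (P : k[X]) (x y : L) :
    aeval (LieAlgebra.ad k L' (f x)) P (f y) = f (aeval (LieAlgebra.ad k L x) P y) := by
  have ad_comp : LieAlgebra.ad k L' (f x) ∘ₗ (f : L →ₗ[k] L') = f ∘ₗ LieAlgebra.ad k L x := by
    ext y
    simp
  induction P using Polynomial.induction_on' with
  | add P Q hP hQ => simp only [map_add, LinearMap.add_apply, hP, hQ]
  | monomial n c =>
    have pow_apply := LinearMap.congr_fun (Module.End.commute_pow_left_of_commute ad_comp n) y
    simpa [aeval_monomial] using congrArg (c • ·) pow_apply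

end AdditivePolynomial

section Center

/-- An algebra as an algebra over its centre. -/
abbrev centerAlgebra (k A : Type*) [CommRing k] [Ring A] [Algebra k A] :
    Algebra (Subalgebra.center k A) A where
  algebraMap := (Subalgebra.center k A).val.toRingHom
  commutes' z a := (Subalgebra.mem_center_iff.1 z.2 a).symm
  smul_def' _ _ := rfl

attribute [local instance] centerAlgebra

theorem isIntegral_of_aeval_eq_algebraMap {R A : Type*} [CommRing R] [Ring A] [Algebra R A]
    {P : Polynomial R} (hP : P.Monic) (natDegree_pos : 0 < P.natDegree) {a : A} {z : R}
    (h : Polynomial.aeval a P = algebraMap R A z) : IsIntegral R a :=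
  ⟨P - Polynomial.C z, hP.sub_of_left
    (Polynomial.degree_C_le.trans_lt (Polynomial.natDegree_pos_iff_degree_pos.1 natDegree_pos)), by
    simpa [← Polynomial.aeval_def, sub_eq_zero] using h⟩

variable {k A L : Type*} [Field k] [Ring A] [Algebra k A] [LieRing L] [LieAlgebra k L]

theorem SatisfiesPolynomialIdentity.of_finite_center
    (h : Module.Finite (Subalgebra.center k A) A) : SatisfiesPolynomialIdentity k A :=
  have := h
  .of_finite k (Subalgebra.center k A) A

theorem module_finite_center_of_isIntegral_of_lie_mem_span {s : Finset A}
    (adjoin_eq_top : Algebra.adjoin k (s : Set A) = ⊤) (hs : 1 ∈ s)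
    (integral : ∀ a ∈ s, IsIntegral (Subalgebra.center k A) a)
    (comm : ∀ a ∈ s, ∀ b ∈ s, a * b - b * a ∈ Submodule.span k (s : Set A)) :
    Module.Finite (Subalgebra.center k A) A := by
  refine module_finite_of_isIntegral_of_lie_mem_span ?_ hs integral fun a ha b hb =>
    Submodule.span_le_restrictScalars k (Subalgebra.center k A) _ (comm a ha b hb)
  have adjoin_le : Algebra.adjoin k (s : Set A) ≤
      (Algebra.adjoin (Subalgebra.center k A) (s : Set A)).restrictScalars k :=
    Algebra.adjoin_le Algebra.subset_adjoin
  rw [eq_top_iff]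
  exact fun a _ => adjoin_le (adjoin_eq_top ▸ Algebra.mem_top)

theorem mem_center_of_forall_commute_ι {u : UniversalEnvelopingAlgebra k L}
    (h : ∀ x : L, Commute u (UniversalEnvelopingAlgebra.ι k x)) :
    u ∈ Subalgebra.center k (UniversalEnvelopingAlgebra k L) := by
  refine Subalgebra.mem_center_iff.2 fun v =>
    (Algebra.commute_of_mem_adjoin_of_forall_mem_commute (R := k) (s := Set.range _) ?_
      (Set.forall_mem_range.2 h)).symm
  rw [adjoin_range_universalEnvelopingAlgebra_ι]
  exact Algebra.mem_top

theorem isIntegral_center_ι (p : ℕ) [Fact p.Prime] [CharP k p] [FiniteDimensional k L] (x : L) :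
    IsIntegral (Subalgebra.center k (UniversalEnvelopingAlgebra k L))
      (UniversalEnvelopingAlgebra.ι k x) := by
  have hp : p.Prime := Fact.out
  obtain ⟨P, hP, monic, aeval_P⟩ := exists_monic_mem_additivePolynomials_aeval_eq_zero
    (k := k) hp.one_lt (LieAlgebra.ad k L x)
  have mem_center : Polynomial.aeval (UniversalEnvelopingAlgebra.ι k x) P ∈
      Subalgebra.center k (UniversalEnvelopingAlgebra k L) := by
    refine mem_center_of_forall_commute_ι fun y => ?_
    rw [commute_iff_lie_eq, ← LieAlgebra.ad_apply (R := k),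
      ad_aeval_of_mem_additivePolynomials p hP, aeval_ad_map_apply, aeval_P, LinearMap.zero_apply,
      map_zero]
  have natDegree_pos : 0 < P.natDegree := by
    refine Nat.pos_of_ne_zero fun h => one_ne_zero (α := k) ?_
    rw [← coeff_zero_of_mem_additivePolynomials hp.ne_zero hP,
      monic.natDegree_eq_zero.1 h, Polynomial.coeff_one_zero]
  have : Nontrivial (UniversalEnvelopingAlgebra k L) :=
    (UniversalEnvelopingAlgebra.lift k (0 : L →ₗ⁅k⁆ k)).toRingHom.domain_nontrivial
  refine isIntegral_of_aeval_eq_algebraMap (z := ⟨_, mem_center⟩)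
    (monic.map (algebraMap k _)) (natDegree_pos.trans_eq (monic.natDegree_map _).symm) ?_
  rw [Polynomial.aeval_map_algebraMap]
  rfl

theorem module_finite_center_universalEnvelopingAlgebra_of_charP (k L : Type*) [Field k] [LieRing L]
    [LieAlgebra k L] [FiniteDimensional k L] (p : ℕ) [Fact p.Prime] [CharP k p] :
    Module.Finite (Subalgebra.center k (UniversalEnvelopingAlgebra k L))
      (UniversalEnvelopingAlgebra k L) := by
  classical
  let b := Module.finBasis k L
  let s : Finset (UniversalEnvelopingAlgebra k L) :=
    insert 1 (Finset.univ.image fun i => UniversalEnvelopingAlgebra.ι k (b i))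
  have ι_mem_span (x : L) : UniversalEnvelopingAlgebra.ι k x ∈ Submodule.span k (s : Set _) := by
    rw [← b.sum_repr x, map_sum]
    refine Submodule.sum_mem _ fun i _ => ?_
    rw [map_smul]
    exact Submodule.smul_mem _ _ (Submodule.subset_span
      (Finset.mem_insert_of_mem (Finset.mem_image_of_mem _ (Finset.mem_univ i))))
  have adjoin_eq_top : Algebra.adjoin k (s : Set (UniversalEnvelopingAlgebra k L)) = ⊤ := by
    rw [eq_top_iff, ← adjoin_range_universalEnvelopingAlgebra_ι, Algebra.adjoin_le_iff]
    exact Set.range_subset_iff.2 fun x => Algebra.span_le_adjoin k _ (ι_mem_span x)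
  have mem_s {a : UniversalEnvelopingAlgebra k L} (ha : a ∈ s) :
      a = 1 ∨ ∃ x : L, UniversalEnvelopingAlgebra.ι k x = a := by
    rcases Finset.mem_insert.1 ha with rfl | ha
    · exact .inl rfl
    · obtain ⟨i, -, rfl⟩ := Finset.mem_image.1 ha
      exact .inr ⟨b i, rfl⟩
  refine module_finite_center_of_isIntegral_of_lie_mem_span adjoin_eq_top
    (Finset.mem_insert_self _ _) (fun a ha => ?_) fun a ha c hc => ?_
  · rcases mem_s ha with rfl | ⟨x, rfl⟩
    · exact isIntegral_one
    · exact isIntegral_center_ι p x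
  · rcases mem_s ha, mem_s hc with ⟨rfl | ⟨x, rfl⟩, rfl | ⟨y, rfl⟩⟩
    iterate 3 simp only [mul_one, one_mul, sub_self, zero_mem]
    rw [← LieRing.of_associative_ring_bracket, ← LieHom.map_lie]
    exact ι_mem_span _

theorem module_finite_center_universalEnvelopingAlgebra_of_isLieAbelian [IsLieAbelian L] :
    Module.Finite (Subalgebra.center k (UniversalEnvelopingAlgebra k L))
      (UniversalEnvelopingAlgebra k L) := by
  have ι_mem_center (x : L) : UniversalEnvelopingAlgebra.ι k x ∈
      Subalgebra.center k (UniversalEnvelopingAlgebra k L) :=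
    mem_center_of_forall_commute_ι fun y => by
      rw [commute_iff_lie_eq, ← LieHom.map_lie, trivial_lie_zero, map_zero]
  have center_eq_top : Subalgebra.center k (UniversalEnvelopingAlgebra k L) = ⊤ := by
    rw [eq_top_iff, ← adjoin_range_universalEnvelopingAlgebra_ι]
    exact Algebra.adjoin_le (Set.range_subset_iff.2 ι_mem_center)
  refine Module.Finite.of_surjective (Algebra.linearMap (Subalgebra.center k _) _) fun u => ?_
  exact ⟨⟨u, center_eq_top ▸ Algebra.mem_top⟩, rfl⟩

end Center

end

theorem universalEnvelopingAlgebra_PI_iff_abelian_or_positive_char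
    (k : Type u) [Field k] (g : Type v) [LieRing g] [LieAlgebra k g]
    [FiniteDimensional k g] :
    SatisfiesPolynomialIdentity k (UniversalEnvelopingAlgebra k g) ↔
      (IsLieAbelian g ∨ ringChar k ≠ 0) := by
  refine ⟨fun h => or_iff_not_imp_right.2 fun hchar => ?_, ?_⟩
  · have : CharP k 0 := ringChar.of_eq (not_not.1 hchar)
    have : CharZero k := CharP.charP_to_charZero k
    exact isLieAbelian_of_satisfiesPolynomialIdentity h
  · rintro (habelian | hchar)
    · exact .of_finite_center module_finite_center_universalEnvelopingAlgebra_of_isLieAbelian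
    · have : Fact (ringChar k).Prime :=
        ⟨(CharP.char_is_prime_or_zero k (ringChar k)).resolve_right hchar⟩
      exact .of_finite_center
        (module_finite_center_universalEnvelopingAlgebra_of_charP k g (ringChar k))
end
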